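/- For every integer n ≥ 13 there exists a constant qₙ (depending only on n) such that: if q, a₁ are integers with q ≥ 2 and a₁² ≤ 4q satisfying −aₙ = ⌊2·q^{n/2}⌋, then either q ≤ qₙ or the pair (q, a₁) is supersingular. -/

import Mathlib

/-!
If `-aₙ = ⌊2 q ^ (n / 2)⌋`, then `‖β ^ n + 1‖ ^ 2 = 2 + aₙ / q ^ (n / 2)` is at most
`q ^ (-n / 2)`, so `β` lies within `O(q ^ (-n / 4))` of some `ζ` with `ζ ^ n = -1`. The number
`2 Re β ^ 2 = (a₁ ^ 2 - 2 q) / q` is rational with denominator dividing `q`, and it approximates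
the algebraic integer `2 Re ζ ^ 2` to the exponent `n / 4 > 2`. By Roth's theorem, applied to the
finitely many `ζ`, the two are equal once `q` is large; then `β ^ 2` is `ζ ^ 2` or its conjugate,
and `β ^ (2 n) = 1`.

For Roth's theorem, Siegel's lemma and a count of exponents of small weight give an integer
polynomial in many variables, of small height, with large index at `(c, …, c)`. By Taylor expansion
and Liouville's bound, infinitely many good approximations of rapidly growing height force a large
index at a rational point, which Roth's lemma, proved with generalized Wronskians, excludes.
-/

namespace Roth

open MvPolynomial Finset

section Hasse

variable {σ R : Type*} [CommRing R]

/-- The Taylor expansion `P(X + Y)`, as a polynomial in `X` with coefficients in `R[Y]`. -/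
noncomputable def taylor : MvPolynomial σ R →ₐ[R] MvPolynomial σ (MvPolynomial σ R) :=
  aeval fun s => X s + C (X s)

/-- The Hasse derivative `(b!)⁻¹ ∂ᵇ`, defined without division as a Taylor coefficient. -/
noncomputable def hasse (b : σ →₀ ℕ) : MvPolynomial σ R →ₗ[R] MvPolynomial σ R where
  toFun P := coeff b (taylor P)
  map_add' P Q := by rw [map_add, coeff_add]
  map_smul' r P := by
    rw [map_smul, algebra_compatible_smul (MvPolynomial σ R) r, coeff_smul,
      algebraMap_smul, RingHom.id_apply]

theorem hasse_mul [DecidableEq σ] (b : σ →₀ ℕ) (P Q : MvPolynomial σ R) :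
    hasse b (P * Q) = ∑ p ∈ antidiagonal b, hasse p.1 P * hasse p.2 Q := by
  change coeff b (taylor (P * Q)) = _
  rw [map_mul, coeff_mul]
  rfl

theorem hasse_zero_apply (P : MvPolynomial σ R) : hasse 0 P = P := by
  change constantCoeff (taylor P) = P
  have : (constantCoeff.comp taylor.toRingHom : MvPolynomial σ R →+* _) = RingHom.id _ :=
    MvPolynomial.ringHom_ext (fun r => by
      simp [taylor, algebraMap_eq, MvPolynomial.algebraMap_apply])
      (fun s => by simp [taylor])
  exact congr($this P)

section Multichoose

variable [Fintype σ]

/-- The multi-index binomial coefficient, the factor by which `hasse b` multiplies `X ^ e`; it is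
zero unless `b ≤ e`. -/
def multichoose (e b : σ →₀ ℕ) : ℕ := ∏ s, (e s).choose (b s)

theorem multichoose_eq_zero {e b : σ →₀ ℕ} (h : ¬ b ≤ e) : multichoose e b = 0 := by
  obtain ⟨s, hs⟩ := not_forall.1 h
  exact prod_eq_zero (mem_univ s) (Nat.choose_eq_zero_of_lt (not_le.1 hs))

theorem taylor_monomial [DecidableEq σ] (e : σ →₀ ℕ) (r : R) :
    taylor (monomial e r) = ∑ b ∈ Icc 0 e, monomial b (monomial (e - b) (r * multichoose e b)) := by
  have term (b : σ →₀ ℕ) : (∏ s, X s ^ b s * C (X s) ^ (e s - b s) * ((e s).choose (b s) :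
      MvPolynomial σ (MvPolynomial σ R))) =
        monomial b (monomial (e - b) (multichoose e b : R)) := by
    rw [prod_mul_distrib, prod_mul_distrib, monomial_eq, monomial_eq, multichoose,
      Finsupp.prod_fintype _ _ fun _ => pow_zero _, Finsupp.prod_fintype _ _ fun _ => pow_zero _]
    simp only [Finsupp.tsub_apply, C_mul, map_prod, map_pow, Nat.cast_prod, map_natCast]
    ring
  calc taylor (monomial e r)
      = C (C r) * ∏ s, (X s + C (X s)) ^ e s := by
        rw [taylor, aeval_monomial, Finsupp.prod_fintype _ _ fun _ => pow_zero _]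
        rfl
    _ = C (C r) * ∑ b ∈ Fintype.piFinset fun s => range (e s + 1),
          ∏ s, X s ^ b s * C (X s) ^ (e s - b s) * (((e s).choose (b s) : ℕ) :
            MvPolynomial σ (MvPolynomial σ R)) := by
        simp only [add_pow, prod_univ_sum]
    _ = ∑ b ∈ Icc 0 e, monomial b (monomial (e - b) (r * multichoose e b)) := by
        rw [mul_sum]
        refine sum_equiv Finsupp.equivFunOnFinite.symm (fun b => ?_) fun b _ => ?_
        · simp only [Fintype.mem_piFinset, mem_range, Nat.lt_succ_iff, mem_Icc, zero_le, true_and]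
          rfl
        · rw [← C_mul_monomial, ← C_mul_monomial, ← term]
          simp only [Finsupp.equivFunOnFinite_symm_apply_apply]

theorem hasse_monomial (b e : σ →₀ ℕ) (r : R) :
    hasse b (monomial e r) = monomial (e - b) (r * multichoose e b) := by
  classical
  change coeff b (taylor (monomial e r)) = _
  rw [taylor_monomial, coeff_sum]
  simp only [coeff_monomial, sum_ite_eq', mem_Icc, zero_le, true_and, ite_eq_left_iff]
  intro h
  rw [multichoose_eq_zero h, Nat.cast_zero, mul_zero, map_zero]

theorem coeff_hasse (b e : σ →₀ ℕ) (P : MvPolynomial σ R) :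
    coeff e (hasse b P) = multichoose (e + b) b * coeff (e + b) P := by
  classical
  induction P using MvPolynomial.induction_on' with
  | add P Q hP hQ => rw [map_add, coeff_add, coeff_add, hP, hQ, mul_add]
  | monomial a r =>
    rw [hasse_monomial, coeff_monomial, coeff_monomial]
    by_cases hb : b ≤ a
    · simp only [tsub_eq_iff_eq_add_of_le hb]
      split_ifs with h
      · rw [h, mul_comm]
      · rw [mul_zero]
    · rw [multichoose_eq_zero hb, if_neg (fun h : a = e + b => hb (h ▸ le_add_self))]
      simp

theorem multichoose_add_mul (e a b : σ →₀ ℕ) :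
    multichoose (e + a + b) b * multichoose (e + a) a =
      multichoose (a + b) b * multichoose (e + (a + b)) (a + b) := by
  simp only [multichoose, ← prod_mul_distrib, Finsupp.add_apply]
  refine prod_congr rfl fun s _ => ?_
  have := Nat.choose_mul (n := e s + (a s + b s)) (k := a s + b s) (s := b s) (by omega)
  rw [Nat.add_sub_cancel, ← add_assoc, Nat.add_sub_cancel] at this
  rw [← add_assoc, ← this, mul_comm]

theorem hasse_hasse (a b : σ →₀ ℕ) (P : MvPolynomial σ R) :
    hasse a (hasse b P) = multichoose (a + b) b • hasse (a + b) P := by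
  ext e
  rw [coeff_hasse, coeff_hasse, coeff_smul, coeff_hasse, nsmul_eq_mul, ← mul_assoc, ← mul_assoc,
    ← Nat.cast_mul, ← Nat.cast_mul, mul_comm (multichoose (e + a) a), multichoose_add_mul,
    add_assoc]

end Multichoose

variable [Finite σ]

theorem hasse_eq_zero {b : σ →₀ ℕ} {P : MvPolynomial σ R} {s : σ} (h : degreeOf s P < b s) :
    hasse b P = 0 := by
  cases nonempty_fintype σ
  ext e
  rw [coeff_hasse, coeff_zero]
  have : coeff (e + b) P = 0 := by
    by_contra hne
    have := (degreeOf_le_iff (n := s)).1 le_rfl _ (mem_support_iff.2 hne)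
    rw [Finsupp.add_apply] at this
    exact absurd h (by omega)
  rw [this, mul_zero]

theorem le_degreeOf_of_mem_support_taylor {P : MvPolynomial σ R} {i : σ →₀ ℕ}
    (hi : i ∈ (taylor P).support) (s : σ) : i s ≤ degreeOf s P :=
  not_lt.1 fun hs => mem_support_iff.1 hi (hasse_eq_zero hs)

theorem degreeOf_hasse_le (b : σ →₀ ℕ) (P : MvPolynomial σ R) (s : σ) :
    degreeOf s (hasse b P) ≤ degreeOf s P := by
  cases nonempty_fintype σ
  refine degreeOf_le_iff.2 fun e he => ?_
  rw [mem_support_iff, coeff_hasse] at he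
  exact (Nat.le_add_right _ _).trans
    (degreeOf_le_iff.1 le_rfl (e + b) (mem_support_iff.2 (right_ne_zero_of_mul he)))

theorem map_hasse {S : Type*} [CommRing S] (f : R →+* S) (b : σ →₀ ℕ) (P : MvPolynomial σ R) :
    map f (hasse b P) = hasse b (map f P) := by
  cases nonempty_fintype σ
  ext e
  simp only [coeff_map, coeff_hasse, map_mul, map_natCast]

end Hasse

section Interpolation

variable {σ K : Type*} [Fintype σ]

theorem mul_multichoose (e b : σ →₀ ℕ) (s : σ) :
    e s * multichoose e b =
      (b s + 1) * multichoose e (b + .single s 1) + b s * multichoose e b := by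
  classical
  have split (c : σ →₀ ℕ) := mul_prod_erase univ (fun i => (e i).choose (c i)) (mem_univ s)
  have rest : ∏ i ∈ univ.erase s, (e i).choose ((b + .single s 1) i) =
      ∏ i ∈ univ.erase s, (e i).choose (b i) :=
    prod_congr rfl fun i hi => by
      rw [Finsupp.add_apply, Finsupp.single_eq_of_ne (ne_of_mem_erase hi), add_zero]
  have pascal : e s * (e s).choose (b s) =
      (b s + 1) * (e s).choose (b s + 1) + b s * (e s).choose (b s) := by
    rcases le_or_gt (b s) (e s) with h | h
    · obtain ⟨c, hc⟩ := Nat.exists_eq_add_of_le h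
      have := Nat.choose_succ_right_eq (e s) (b s)
      rw [hc, Nat.add_sub_cancel_left] at this
      rw [hc]
      linarith
    · rw [Nat.choose_eq_zero_of_lt h, Nat.choose_eq_zero_of_lt (by omega), mul_zero, mul_zero,
        mul_zero, add_zero]
  rw [multichoose, multichoose, ← split, ← split, rest, Finsupp.add_apply, Finsupp.single_eq_same]
  linear_combination (∏ i ∈ univ.erase s, (e i).choose (b i)) * pascal

variable [Field K] {ι : Type*}

/-- The span of the sequences `j ↦ binom(e j, b)` with `|b| ≤ d`, that is, the values at the
points `e j` of the polynomials of degree at most `d`. -/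
def binomialSpan (K : Type*) [Field K] (e : ι → σ →₀ ℕ) (d : ℕ) : Submodule K (ι → K) :=
  Submodule.span K ((fun b j => (multichoose (e j) b : K)) '' {b | b.degree ≤ d})

theorem binomialSpan_mono (e : ι → σ →₀ ℕ) : Monotone (binomialSpan K e) := fun _ _ h =>
  Submodule.span_mono (Set.image_mono fun _ hb => le_trans hb h)

theorem coord_mul_mem_binomialSpan {e : ι → σ →₀ ℕ} {d : ℕ} {v : ι → K}
    (hv : v ∈ binomialSpan K e d) (s : σ) :
    (fun j => (e j s : K) * v j) ∈ binomialSpan K e (d + 1) := by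
  induction hv using Submodule.span_induction with
  | mem v hv =>
    obtain ⟨b, hb, rfl⟩ := hv
    have succ : (b + Finsupp.single s 1).degree ≤ d + 1 := by
      rw [map_add, Finsupp.degree_single]
      exact Nat.succ_le_succ hb
    have : (fun j => (e j s : K) * multichoose (e j) b) =
        ((b s + 1 : ℕ) : K) • (fun j => (multichoose (e j) (b + .single s 1) : K)) +
          (b s : K) • fun j => (multichoose (e j) b : K) := by
      ext j
      simpa using congrArg (Nat.cast (R := K)) (mul_multichoose (e j) b s)
    rw [this]
    exact add_mem (Submodule.smul_mem _ _ (Submodule.subset_span ⟨_, succ, rfl⟩))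
      (Submodule.smul_mem _ _ (Submodule.subset_span ⟨b, le_trans hb d.le_succ, rfl⟩))
  | zero =>
    simp only [Pi.zero_apply, mul_zero]
    exact zero_mem _
  | add v w _ _ hv hw =>
    simp only [Pi.add_apply, mul_add]
    exact add_mem hv hw
  | smul c v _ hv =>
    simp only [Pi.smul_apply, smul_eq_mul, mul_left_comm _ c]
    exact Submodule.smul_mem _ c hv

theorem exists_mem_binomialSpan_separating [CharZero K] {e : ι → σ →₀ ℕ}
    (he : Function.Injective e) (j : ι) (T : Finset ι) (hj : j ∉ T) :
    ∃ v ∈ binomialSpan K e #T, v j ≠ 0 ∧ ∀ i ∈ T, v i = 0 := by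
  classical
  induction T using Finset.induction_on with
  | empty =>
    refine ⟨_, Submodule.subset_span ⟨0, by simp, rfl⟩, ?_, by simp⟩
    simp [multichoose]
  | insert a T ha ih =>
    obtain ⟨hja, hjT⟩ := not_or.1 (mem_insert.not.1 hj)
    obtain ⟨v, hv, hvj, hvT⟩ := ih hjT
    obtain ⟨s, hs⟩ := Finsupp.ne_iff.1 (he.ne hja)
    refine ⟨fun i => (e i s : K) * v i - e a s * v i, ?_, ?_, ?_⟩
    · rw [card_insert_of_notMem ha]
      exact sub_mem (coord_mul_mem_binomialSpan hv s)
        (Submodule.smul_mem _ (e a s : K) (binomialSpan_mono e (Nat.le_succ _) hv))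
    · change _ * v j - _ * v j ≠ 0
      rw [← sub_mul]
      exact mul_ne_zero (sub_ne_zero.2 (Nat.cast_injective.ne hs)) hvj
    · rintro i hi
      rcases mem_insert.1 hi with rfl | hi
      · exact sub_self _
      · change _ * v i - _ * v i = 0
        rw [hvT i hi, mul_zero, mul_zero, sub_zero]

theorem binomialSpan_eq_top [CharZero K] [Fintype ι] {e : ι → σ →₀ ℕ}
    (he : Function.Injective e) : binomialSpan K e (Fintype.card ι - 1) = ⊤ := by
  classical
  refine (eq_top_iff.2 ((Pi.basisFun K ι).span_eq.ge.trans (Submodule.span_le.2 ?_)))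
  rintro _ ⟨j, rfl⟩
  obtain ⟨v, hv, hvj, hv0⟩ := exists_mem_binomialSpan_separating (K := K) he j _
    (notMem_erase j univ)
  have : Pi.basisFun K ι j = (v j)⁻¹ • v := by
    ext i
    rw [Pi.basisFun_apply, Pi.smul_apply, smul_eq_mul]
    rcases eq_or_ne i j with rfl | hi
    · rw [Pi.single_eq_same, inv_mul_cancel₀ hvj]
    · rw [Pi.single_eq_of_ne hi, hv0 i (mem_erase.2 ⟨hi, mem_univ i⟩), mul_zero]
  rw [card_erase_of_mem (mem_univ j), card_univ] at hv
  exact this ▸ Submodule.smul_mem _ _ hv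

theorem exists_linearIndependent_of_span_eq_top {V : Type*} [AddCommGroup V] [Module K V]
    [Module.Finite K V] [Fintype ι] {S : Set V} (hS : Submodule.span K S = ⊤)
    (hcard : Module.finrank K V = Fintype.card ι) :
    ∃ f : ι → V, (∀ i, f i ∈ S) ∧ LinearIndependent K f := by
  let B := Module.Basis.ofSpan hS.ge
  have := FiniteDimensional.fintypeBasisIndex B
  obtain ⟨g⟩ := Fintype.card_eq.1 (hcard.symm.trans (Module.finrank_eq_card_basis B))
  exact ⟨B ∘ g, fun i => Module.Basis.ofSpan_subset hS.ge ⟨g i, rfl⟩,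
    B.linearIndependent.comp g g.injective⟩

theorem exists_det_multichoose_ne_zero [CharZero K] [Fintype ι] [DecidableEq ι] {e : ι → σ →₀ ℕ}
    (he : Function.Injective e) :
    ∃ b : ι → σ →₀ ℕ, (∀ a, (b a).degree < Fintype.card ι) ∧
      (Matrix.of fun a j => (multichoose (e j) (b a) : K)).det ≠ 0 := by
  obtain ⟨f, hf, hind⟩ := exists_linearIndependent_of_span_eq_top (ι := ι)
    (binomialSpan_eq_top (K := K) he) (Module.finrank_fintype_fun_eq_card K)
  choose b hb hbf using hf
  refine ⟨b, fun a => ?_, fun hdet => ?_⟩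
  · have := Fintype.card_pos_iff.2 ⟨a⟩
    have := hb a
    rw [Set.mem_ofPred_eq] at this
    omega
  · have : LinearIndependent K (Matrix.of fun a j => (multichoose (e j) (b a) : K)).row := by
      rw [show (Matrix.of fun a j => (multichoose (e j) (b a) : K)).row = f from funext hbf]
      exact hind
    rw [Matrix.linearIndependent_rows_iff_isUnit, Matrix.isUnit_iff_isUnit_det, hdet] at this
    exact not_isUnit_zero this

end Interpolation

section GeneralizedWronskian

variable {σ K ι : Type*} [Field K] [Fintype ι] [DecidableEq ι]

theorem coeff_prod_of_degree_le {κ R : Type*} [CommRing R] (m : MonomialOrder σ) (s : Finset κ)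
    {P : κ → MvPolynomial σ R} {d : κ → σ →₀ ℕ}
    (h : ∀ i ∈ s, m.toSyn (m.degree (P i)) ≤ m.toSyn (d i)) :
    coeff (∑ i ∈ s, d i) (∏ i ∈ s, P i) = ∏ i ∈ s, coeff (d i) (P i) := by
  classical
  induction s using Finset.induction_on with
  | empty => simp
  | insert a s ha ih =>
    have hs : ∀ i ∈ s, m.toSyn (m.degree (P i)) ≤ m.toSyn (d i) :=
      fun i hi => h i (mem_insert_of_mem hi)
    rw [prod_insert ha, sum_insert ha, prod_insert ha,
      m.coeff_mul_of_add_of_degree_le (h a (mem_insert_self a s)), ih hs]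
    refine m.degree_prod_le.trans ?_
    simp only [map_sum]
    exact sum_le_sum hs

theorem degree_sub_smul_lt {m : MonomialOrder σ} {P Q : MvPolynomial σ K} (hQ : Q ≠ 0)
    (hdeg : m.degree P = m.degree Q) {c : K} (hc : c = m.leadingCoeff P / m.leadingCoeff Q)
    (hne : P - c • Q ≠ 0) : m.toSyn (m.degree (P - c • Q)) < m.toSyn (m.degree P) := by
  have hcoeff : coeff (m.degree P) (P - c • Q) = 0 := by
    rw [coeff_sub, coeff_smul, hc, smul_eq_mul, hdeg]
    change coeff _ P - _ * m.leadingCoeff Q = 0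
    rw [div_mul_cancel₀ _ (m.leadingCoeff_ne_zero_iff.2 hQ), ← hdeg]
    exact sub_self _
  refine lt_of_le_of_ne (m.degree_sub_le.trans (sup_le le_rfl ?_)) fun h => ?_
  · exact m.degree_smul_le.trans (congrArg m.toSyn hdeg.symm).le
  · rw [← m.toSyn.injective h] at hcoeff
    exact m.coeff_degree_ne_zero_iff.2 hne hcoeff

/-- Gaussian elimination: among the families with the same determinants, one of minimal total
degree has distinct degrees. -/
theorem exists_injective_degree (m : MonomialOrder σ) {φ : ι → MvPolynomial σ K}
    (hφ : LinearIndependent K φ) :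
    ∃ f : ι → MvPolynomial σ K, (∀ j, f j ≠ 0) ∧ Function.Injective (fun j => m.degree (f j)) ∧
      ∀ L : ι → MvPolynomial σ K →ₗ[K] MvPolynomial σ K,
        (Matrix.of fun a j => L a (f j)).det = (Matrix.of fun a j => L a (φ j)).det := by
  let S (f : ι → MvPolynomial σ K) : Prop := LinearIndependent K f ∧
    ∀ L : ι → MvPolynomial σ K →ₗ[K] MvPolynomial σ K,
      (Matrix.of fun a j => L a (f j)).det = (Matrix.of fun a j => L a (φ j)).det
  obtain ⟨f, ⟨hf, hdet⟩, hmin⟩ := exists_minimalFor_of_wellFoundedLT S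
    (fun f => ∑ j, m.toSyn (m.degree (f j))) ⟨φ, hφ, fun _ => rfl⟩
  refine ⟨f, hf.ne_zero, fun i j hij => by_contra fun hne => ?_, hdet⟩
  let c := m.leadingCoeff (f i) / m.leadingCoeff (f j)
  let g := Function.update f i (f i - c • f j)
  have hg : LinearIndependent K g := by
    have := (linearIndependent_add_smul_iff (v := f) (c := Pi.single i (-c)) (i := j)
      (Pi.single_eq_of_ne (Ne.symm hne) _)).2 hf
    rwa [show g = _ from ?_]
    ext1 k
    rcases eq_or_ne k i with rfl | hk
    · simp [g, sub_eq_add_neg]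
    · simp [g, hk]
  have hlt : ∑ k, m.toSyn (m.degree (g k)) < ∑ k, m.toSyn (m.degree (f k)) := by
    have hi : m.toSyn (m.degree (g i)) < m.toSyn (m.degree (f i)) := by
      have hgi : g i = f i - c • f j := Function.update_self ..
      rw [hgi]
      exact degree_sub_smul_lt (hf.ne_zero j) hij rfl (hgi ▸ hg.ne_zero i)
    refine sum_lt_sum (fun k _ => ?_) ⟨i, mem_univ i, hi⟩
    rcases eq_or_ne k i with rfl | hk
    · exact hi.le
    · simp [g, hk]
  refine hlt.not_ge (hmin ⟨hg, fun L => ?_⟩ hlt.le)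
  rw [← hdet, ← Matrix.det_updateCol_add_smul_self (Matrix.of fun a j => L a (f j)) hne (C (-c))]
  refine congrArg Matrix.det (Matrix.ext fun a k => ?_)
  rcases eq_or_ne k i with rfl | hk
  · simp [g, sub_eq_add_neg, ← smul_eq_C_mul]
  · simp [g, hk]

theorem coeff_monomial_mul_hasse [Fintype σ] {R : Type*} [CommRing R] (b e : σ →₀ ℕ)
    (P : MvPolynomial σ R) :
    coeff e (monomial b 1 * hasse b P) = multichoose e b * coeff e P := by
  rw [coeff_monomial_mul', coeff_hasse, one_mul]
  split_ifs with h
  · rw [tsub_add_cancel_of_le h]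
  · rw [multichoose_eq_zero h, Nat.cast_zero, zero_mul]

/-- The operators `X ^ b * hasse b` act diagonally on monomials, with binomial eigenvalues. Once the
leading exponents are distinct, the leading coefficient of the determinant is therefore a nonzero
multiple of a determinant of binomials. -/
theorem exists_det_hasse_ne_zero [Finite σ] [LinearOrder σ] [CharZero K]
    {φ : ι → MvPolynomial σ K} (hφ : LinearIndependent K φ) :
    ∃ b : ι → σ →₀ ℕ, (∀ a, (b a).degree < Fintype.card ι) ∧
      (Matrix.of fun a j => hasse (b a) (φ j)).det ≠ 0 := by
  cases nonempty_fintype σ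
  let m : MonomialOrder σ := MonomialOrder.lex
  obtain ⟨f, hf0, hinj, hdet⟩ := exists_injective_degree m hφ
  let d j := m.degree (f j)
  obtain ⟨b, hb, hne⟩ := exists_det_multichoose_ne_zero (K := K) hinj
  refine ⟨b, hb, fun hzero => ?_⟩
  let euler (a : ι) (P : MvPolynomial σ K) := monomial (b a) 1 * hasse (b a) P
  have hcoeff (a j : ι) : coeff (d j) (euler a (f j)) =
      multichoose (d j) (b a) * m.leadingCoeff (f j) :=
    coeff_monomial_mul_hasse ..
  have hdeg (a j : ι) : m.toSyn (m.degree (euler a (f j))) ≤ m.toSyn (d j) := by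
    refine m.degree_le_iff.2 fun e he => m.le_degree ?_
    rw [mem_support_iff, coeff_monomial_mul_hasse] at he
    exact mem_support_iff.2 (right_ne_zero_of_mul he)
  have htop : coeff (∑ j, d j) (Matrix.of fun a j => euler a (f j)).det =
      (∏ j, m.leadingCoeff (f j)) * (Matrix.of fun a j => (multichoose (d j) (b a) : K)).det := by
    rw [← Matrix.det_mul_row, Matrix.det_apply', Matrix.det_apply', coeff_sum]
    refine sum_congr rfl fun τ _ => ?_
    rw [← map_intCast (C : K →+* MvPolynomial σ K), coeff_C_mul]
    simp only [Matrix.of_apply]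
    rw [coeff_prod_of_degree_le m univ fun j _ => hdeg (τ j) j]
    simp only [hcoeff, mul_comm]
  have hzero' : (Matrix.of fun a j => euler a (f j)).det = 0 := by
    have := Matrix.det_mul_column (fun a => monomial (b a) (1 : K))
      (Matrix.of fun a j => hasse (b a) (f j))
    rwa [hdet fun a => hasse (b a), hzero, mul_zero] at this
  rw [hzero', coeff_zero] at htop
  have hlead : ∏ j, m.leadingCoeff (f j) ≠ 0 :=
    prod_ne_zero_iff.2 fun j _ => m.leadingCoeff_ne_zero_iff.2 (hf0 j)
  exact mul_ne_zero hlead hne htop.symm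

end GeneralizedWronskian

section Index

variable {σ R S : Type*} [CommRing R] [CommRing S] [Algebra R S]
  {ξ : σ → S} {w : σ → ℝ} {e f : ℝ} {P Q : MvPolynomial σ R}

/-- The index of `P` at `ξ` with respect to the weights `w` is at least `e`: the Hasse derivatives
`hasse i P` with `∑ s, i s * w s < e` vanish at `ξ`. -/
def HasIndexGE (ξ : σ → S) (w : σ → ℝ) (e : ℝ) (P : MvPolynomial σ R) : Prop :=
  ∀ i : σ →₀ ℕ, Finsupp.weight w i < e → aeval ξ (hasse i P) = 0

theorem weight_nonneg (hw : 0 ≤ w) (i : σ →₀ ℕ) : 0 ≤ Finsupp.weight w i := by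
  rw [Finsupp.weight_apply]
  exact Finsupp.sum_nonneg fun s _ => nsmul_nonneg (hw s) _

theorem HasIndexGE.mono (h : HasIndexGE ξ w f P) (hef : e ≤ f) : HasIndexGE ξ w e P :=
  fun i hi => h i (hi.trans_le hef)

theorem HasIndexGE.of_nonpos (hw : 0 ≤ w) (he : e ≤ 0) : HasIndexGE ξ w e P :=
  fun i hi => absurd (weight_nonneg hw i) (not_le.2 (hi.trans_le he))

theorem HasIndexGE.sum {ι : Type*} {T : Finset ι} {p : ι → MvPolynomial σ R}
    (h : ∀ a ∈ T, HasIndexGE ξ w e (p a)) : HasIndexGE ξ w e (∑ a ∈ T, p a) := fun i hi => by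
  rw [map_sum, map_sum]
  exact sum_eq_zero fun a ha => h a ha i hi

theorem HasIndexGE.mul (hP : HasIndexGE ξ w e P) (hQ : HasIndexGE ξ w f Q) :
    HasIndexGE ξ w (e + f) (P * Q) := fun i hi => by
  classical
  rw [hasse_mul, map_sum]
  refine sum_eq_zero fun p hp => ?_
  rw [← mem_antidiagonal.1 hp, map_add] at hi
  rw [map_mul]
  rcases lt_or_ge (Finsupp.weight w p.1) e with h | h
  · rw [hP _ h, zero_mul]
  · rw [hQ _ (by linarith), mul_zero]

theorem HasIndexGE.prod (hw : 0 ≤ w) {ι : Type*} (T : Finset ι) {p : ι → MvPolynomial σ R}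
    {e : ι → ℝ} (h : ∀ a ∈ T, HasIndexGE ξ w (e a) (p a)) :
    HasIndexGE ξ w (∑ a ∈ T, e a) (∏ a ∈ T, p a) := by
  classical
  induction T using Finset.induction_on with
  | empty => exact .of_nonpos hw (sum_empty).le
  | insert a T ha ih =>
    rw [prod_insert ha, sum_insert ha]
    exact (h a (mem_insert_self a T)).mul (ih fun i hi => h i (mem_insert_of_mem hi))

theorem HasIndexGE.det (hw : 0 ≤ w) {ι : Type*} [Fintype ι] [DecidableEq ι]
    {M : Matrix ι ι (MvPolynomial σ R)} {e : ι → ℝ} (h : ∀ a c, HasIndexGE ξ w (e c) (M a c)) :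
    HasIndexGE ξ w (∑ c, e c) M.det := by
  rw [Matrix.det_apply']
  refine .sum fun τ _ => ?_
  rw [← zero_add (∑ c, e c)]
  exact (HasIndexGE.of_nonpos hw le_rfl).mul (.prod hw _ fun c _ => h (τ c) c)

theorem hasIndexGE_hasse [Finite σ] (h : HasIndexGE ξ w e P) (b : σ →₀ ℕ) :
    HasIndexGE ξ w (e - Finsupp.weight w b) (hasse b P) := fun i hi => by
  cases nonempty_fintype σ
  rw [hasse_hasse, map_nsmul, h _ (by rw [map_add]; linarith), smul_zero]

theorem HasIndexGE.smul_weight {r : ℝ} (h : HasIndexGE ξ w e P) (hr : 0 < r) :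
    HasIndexGE ξ (r • w) (r * e) P := fun i hi => h i <| by
  have : Finsupp.weight (r • w) i = r * Finsupp.weight w i := by
    simp only [Finsupp.weight_apply, Finsupp.sum, mul_sum, Pi.smul_apply, smul_eq_mul,
      nsmul_eq_mul, mul_left_comm]
  rw [this] at hi
  exact lt_of_mul_lt_mul_left hi hr.le

end Index

section DegreeOf

variable {σ R ι : Type*} [CommRing R]

theorem degreeOf_det_le [Fintype ι] [DecidableEq ι] {M : Matrix ι ι (MvPolynomial σ R)} {s : σ}
    {D : ℕ} (h : ∀ a c, degreeOf s (M a c) ≤ D) : degreeOf s M.det ≤ Fintype.card ι * D := by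
  rw [Matrix.det_apply']
  refine (degreeOf_sum_le s _ _).trans (Finset.sup_le fun τ _ => ?_)
  rw [← map_intCast (C : R →+* MvPolynomial σ R)]
  refine (degreeOf_C_mul_le _ s _).trans ((degreeOf_prod_le s _ _).trans ?_)
  exact (sum_le_card_nsmul _ _ _ fun c _ => h (τ c) c).trans_eq (by rw [card_univ, smul_eq_mul])

end DegreeOf

section Length

variable {σ ι : Type*}

/-- The sum of the absolute values of the coefficients; it measures the height of a polynomial and,
unlike the maximum, is submultiplicative. -/
noncomputable def len (P : MvPolynomial σ ℤ) : ℕ := ∑ e ∈ P.support, (coeff e P).natAbs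

theorem len_eq_sum {P : MvPolynomial σ ℤ} {T : Finset (σ →₀ ℕ)} (h : P.support ⊆ T) :
    len P = ∑ e ∈ T, (coeff e P).natAbs :=
  sum_subset h fun e _ he => by rw [notMem_support_iff.1 he, Int.natAbs_zero]

theorem natAbs_coeff_le_len (P : MvPolynomial σ ℤ) (e : σ →₀ ℕ) : (coeff e P).natAbs ≤ len P := by
  classical
  rw [len_eq_sum (subset_insert e P.support)]
  exact single_le_sum (f := fun e => (coeff e P).natAbs) (fun _ _ => Nat.zero_le _)
    (mem_insert_self e _)

theorem len_add_le (P Q : MvPolynomial σ ℤ) : len (P + Q) ≤ len P + len Q := by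
  classical
  rw [len_eq_sum support_add, len_eq_sum (P := P) subset_union_left,
    len_eq_sum (P := Q) subset_union_right, ← sum_add_distrib]
  exact sum_le_sum fun e _ => Int.natAbs_add_le _ _

theorem len_neg (P : MvPolynomial σ ℤ) : len (-P) = len P := by
  simp only [len, support_neg, coeff_neg, Int.natAbs_neg]

theorem len_sum_le (T : Finset ι) (p : ι → MvPolynomial σ ℤ) :
    len (∑ a ∈ T, p a) ≤ ∑ a ∈ T, len (p a) :=
  le_sum_of_subadditive _ (by simp [len]) len_add_le _ _

theorem len_monomial (e : σ →₀ ℕ) (r : ℤ) : len (monomial e r) = r.natAbs := by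
  classical
  rw [len_eq_sum support_monomial_subset, sum_singleton, coeff_monomial, if_pos rfl]

theorem len_mul_le (P Q : MvPolynomial σ ℤ) : len (P * Q) ≤ len P * len Q := by
  conv_lhs => rw [P.as_sum, Q.as_sum, sum_mul_sum]
  simp only [len.eq_def P, len.eq_def Q, sum_mul_sum]
  refine (len_sum_le _ _).trans (sum_le_sum fun d _ => (len_sum_le _ _).trans_eq ?_)
  exact sum_congr rfl fun e _ => by rw [monomial_mul, len_monomial, Int.natAbs_mul]

theorem len_prod_le (T : Finset ι) {p : ι → MvPolynomial σ ℤ} {H : ℕ}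
    (h : ∀ a ∈ T, len (p a) ≤ H) : len (∏ a ∈ T, p a) ≤ H ^ #T := by
  classical
  induction T using Finset.induction_on with
  | empty => exact (len_monomial 0 1).le
  | insert a T ha ih =>
    rw [prod_insert ha, card_insert_of_notMem ha, pow_succ']
    exact (len_mul_le _ _).trans (Nat.mul_le_mul (h a (mem_insert_self a T))
      (ih fun i hi => h i (mem_insert_of_mem hi)))

theorem len_det_le [Fintype ι] [DecidableEq ι] {M : Matrix ι ι (MvPolynomial σ ℤ)} {H : ℕ}
    (h : ∀ a c, len (M a c) ≤ H) : len M.det ≤ (Fintype.card ι * H) ^ Fintype.card ι := by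
  have hterm (τ : Equiv.Perm ι) :
      len (Equiv.Perm.sign τ • ∏ c, M (τ c) c) ≤ H ^ Fintype.card ι := by
    have := len_prod_le univ fun c _ => h (τ c) c
    rcases Int.units_eq_one_or (Equiv.Perm.sign τ) with hτ | hτ <;> rw [hτ]
    · rwa [one_smul]
    · rwa [Units.neg_smul, one_smul, len_neg]
  calc len M.det ≤ ∑ _ : Equiv.Perm ι, H ^ Fintype.card ι := by
        rw [Matrix.det_apply]
        exact (len_sum_le _ _).trans (sum_le_sum fun _ _ => hterm _)
    _ = (Fintype.card ι).factorial * H ^ Fintype.card ι := by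
        rw [sum_const, card_univ, Fintype.card_perm, smul_eq_mul]
    _ ≤ (Fintype.card ι * H) ^ Fintype.card ι := by
        rw [mul_pow]
        exact Nat.mul_le_mul_right _ (Nat.factorial_le_pow _)

theorem len_hasse_le [Fintype σ] {P : MvPolynomial σ ℤ} {D : σ → ℕ} (hD : ∀ s, degreeOf s P ≤ D s)
    (b : σ →₀ ℕ) : len (hasse b P) ≤ 2 ^ (∑ s, D s) * len P := by
  conv_lhs => rw [P.as_sum, map_sum]
  rw [len.eq_def P, mul_sum]
  refine (len_sum_le _ _).trans (sum_le_sum fun e he => ?_)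
  rw [hasse_monomial, len_monomial, Int.natAbs_mul, Int.natAbs_natCast, mul_comm,
    ← prod_pow_eq_pow_sum]
  refine Nat.mul_le_mul_right _ (prod_le_prod' fun s _ => (Nat.choose_le_two_pow _ _).trans ?_)
  exact Nat.pow_le_pow_right two_pos (degreeOf_le_iff.1 (hD s) e he)

end Length

section Separation

variable {σ R : Type*} [CommRing R] {s : σ} {U V P : MvPolynomial σ R}

theorem mem_supported_iff_degreeOf {T : Set σ} :
    P ∈ supported R T ↔ ∀ i ∉ T, degreeOf i P = 0 := by
  rw [mem_supported]
  refine forall_congr' fun i => ?_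
  rw [mem_coe, mem_vars_iff_degreeOf_ne_zero, ne_eq, not_imp_comm]

theorem det_mem_supported {T : Set σ} {ι : Type*} [Fintype ι] [DecidableEq ι]
    {M : Matrix ι ι (MvPolynomial σ R)} (h : ∀ a c, M a c ∈ supported R T) :
    M.det ∈ supported R T :=
  mem_supported_iff_degreeOf.2 fun i hi => Nat.le_zero.1
    (degreeOf_det_le fun a c => (mem_supported_iff_degreeOf.1 (h a c) i hi).le)

theorem coeff_eq_zero_of_mem_supported {T : Set σ} (h : P ∈ supported R T) {e : σ →₀ ℕ} {i : σ}
    (hi : i ∉ T) (he : e i ≠ 0) : coeff e P = 0 := by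
  by_contra hne
  have := degreeOf_le_iff.1 (mem_supported_iff_degreeOf.1 h i hi).le e (mem_support_iff.2 hne)
  omega

theorem sum_antidiagonal_eq_erase_single [DecidableEq σ] (s : σ) (b : σ →₀ ℕ)
    (F : (σ →₀ ℕ) → (σ →₀ ℕ) → R) (h₁ : ∀ c d, c s ≠ 0 → F c d = 0)
    (h₂ : ∀ c d, ∀ i ≠ s, d i ≠ 0 → F c d = 0) :
    ∑ p ∈ antidiagonal b, F p.1 p.2 = F (b.erase s) (Finsupp.single s (b s)) := by
  refine sum_eq_single (b.erase s, Finsupp.single s (b s)) (fun p hp hne => ?_) fun h => ?_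
  · by_contra hF
    have hs : p.1 s = 0 := by_contra fun h => hF (h₁ _ _ h)
    have hi (i) (hi : i ≠ s) : p.2 i = 0 := by_contra fun h => hF (h₂ _ _ i hi h)
    have hb (i) : p.1 i + p.2 i = b i := by rw [← mem_antidiagonal.1 hp, Finsupp.add_apply]
    refine hne (Prod.ext (Finsupp.ext fun i => ?_) (Finsupp.ext fun i => ?_)) <;>
    rcases eq_or_ne i s with rfl | h
    · rw [hs, Finsupp.erase_same]
    · rw [Finsupp.erase_ne h, ← hb, hi i h, add_zero]
    · rw [Finsupp.single_eq_same, ← hb, hs, zero_add]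
    · rw [hi i h, Finsupp.single_eq_of_ne h]
  · exact absurd (mem_antidiagonal.2 (Finsupp.erase_add_single s b)) h

theorem coeff_mul_of_mem_supported (hU : U ∈ supported R {s}ᶜ) (hV : V ∈ supported R {s})
    (b : σ →₀ ℕ) : coeff b (U * V) = coeff (b.erase s) U * coeff (.single s (b s)) V := by
  classical
  rw [coeff_mul]
  refine sum_antidiagonal_eq_erase_single s b (fun c d => coeff c U * coeff d V)
    (fun c d h => ?_) fun c d i hi h => ?_
  · rw [coeff_eq_zero_of_mem_supported hU (by simp) h, zero_mul]
  · rw [coeff_eq_zero_of_mem_supported hV (by simpa) h, mul_zero]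

theorem exists_eq_sum_mul_X_pow (s : σ) (P : MvPolynomial σ R) :
    ∃ p : ℕ → MvPolynomial σ R, (∀ d, p d ∈ supported R {s}ᶜ) ∧
      P = ∑ d ∈ range (degreeOf s P + 1), p d * X s ^ d := by
  classical
  refine ⟨fun d => ∑ e ∈ P.support with e s = d, monomial (e.erase s) (coeff e P), fun d => ?_, ?_⟩
  · refine Subalgebra.sum_mem _ fun e _ => mem_supported_iff_degreeOf.2 fun i hi => ?_
    refine Nat.le_zero.1 (degreeOf_le_iff.2 fun a ha => ?_)
    rw [mem_singleton.1 (support_monomial_subset ha), Set.notMem_compl_iff.1 hi, Finsupp.erase_same]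
  · conv_lhs => rw [P.as_sum, ← sum_fiberwise_of_maps_to (t := range (degreeOf s P + 1))
      fun e he => mem_range.2 (Nat.lt_succ_iff.2 (degreeOf_le_iff.1 le_rfl e he))]
    refine sum_congr rfl fun d _ => ?_
    rw [sum_mul]
    refine sum_congr rfl fun e he => ?_
    rw [X_pow_eq_monomial, monomial_mul, mul_one, ← (mem_filter.1 he).2, Finsupp.erase_add_single]

variable [Finite σ]

theorem hasse_eq_zero_of_mem_supported {T : Set σ} (h : P ∈ supported R T) {b : σ →₀ ℕ} {i : σ}
    (hi : i ∉ T) (hb : b i ≠ 0) : hasse b P = 0 :=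
  hasse_eq_zero (s := i) (by rw [mem_supported_iff_degreeOf.1 h i hi]; omega)

theorem hasse_mem_supported {T : Set σ} (h : P ∈ supported R T) (b : σ →₀ ℕ) :
    hasse b P ∈ supported R T :=
  mem_supported_iff_degreeOf.2 fun i hi =>
    Nat.le_zero.1 ((degreeOf_hasse_le b P i).trans (mem_supported_iff_degreeOf.1 h i hi).le)

theorem hasse_mul_of_mem_supported (hU : U ∈ supported R {s}ᶜ) (hV : V ∈ supported R {s})
    (b : σ →₀ ℕ) : hasse b (U * V) = hasse (b.erase s) U * hasse (.single s (b s)) V := by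
  classical
  rw [hasse_mul]
  refine sum_antidiagonal_eq_erase_single s b (fun c d => hasse c U * hasse d V)
    (fun c d h => ?_) fun c d i hi h => ?_
  · rw [hasse_eq_zero_of_mem_supported hU (by simp) h, zero_mul]
  · rw [hasse_eq_zero_of_mem_supported hV (by simpa) h, mul_zero]

end Separation

section Rank

variable {K A : Type*} [Field K] [CommRing A] [Algebra K A] {U V : Submodule K A}

theorem exists_sum_mul_shorter {k : ℕ} {φ ψ : Fin (k + 1) → A} (hφU : ∀ j, φ j ∈ U)
    (hψV : ∀ j, ψ j ∈ V) (hφ : ¬ LinearIndependent K φ) :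
    ∃ φ' ψ' : Fin k → A, (∀ j, φ' j ∈ U) ∧ (∀ j, ψ' j ∈ V) ∧
      ∑ j, φ j * ψ j = ∑ j, φ' j * ψ' j := by
  obtain ⟨c, hc, i, hi⟩ := Fintype.not_linearIndependent_iff.1 hφ
  refine ⟨φ ∘ i.succAbove, fun j => ψ (i.succAbove j) - (c (i.succAbove j) / c i) • ψ i,
    fun j => hφU _, fun j => sub_mem (hψV _) (V.smul_mem _ (hψV i)), ?_⟩
  rw [Fin.sum_univ_succAbove _ i] at hc ⊢
  have hi' : φ i = -∑ j, (c (i.succAbove j) / c i) • φ (i.succAbove j) := by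
    have := congrArg ((c i)⁻¹ • ·) (eq_neg_of_add_eq_zero_left hc)
    simpa only [smul_smul, inv_mul_cancel₀ hi, one_smul, smul_neg, smul_sum, div_eq_inv_mul]
      using this
  simp only [hi', Function.comp_apply, mul_sub, sum_sub_distrib, neg_mul, sum_mul, smul_mul_assoc,
    mul_smul_comm]
  ring

theorem exists_linearIndependent_sum_mul {n : ℕ} {φ ψ : Fin n → A} (hφ : ∀ j, φ j ∈ U)
    (hψ : ∀ j, ψ j ∈ V) :
    ∃ k ≤ n, ∃ φ' ψ' : Fin k → A, (∀ j, φ' j ∈ U) ∧ (∀ j, ψ' j ∈ V) ∧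
      LinearIndependent K φ' ∧ LinearIndependent K ψ' ∧ ∑ j, φ j * ψ j = ∑ j, φ' j * ψ' j := by
  induction n with
  | zero => exact ⟨0, le_rfl, φ, ψ, hφ, hψ, linearIndependent_empty_type,
      linearIndependent_empty_type, rfl⟩
  | succ n ih =>
    by_cases hdep : LinearIndependent K φ ∧ LinearIndependent K ψ
    · exact ⟨n + 1, le_rfl, φ, ψ, hφ, hψ, hdep.1, hdep.2, rfl⟩
    · obtain ⟨φ', ψ', hφ', hψ', h⟩ : ∃ φ' ψ' : Fin n → A, (∀ j, φ' j ∈ U) ∧ (∀ j, ψ' j ∈ V) ∧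
          ∑ j, φ j * ψ j = ∑ j, φ' j * ψ' j := by
        rcases not_and_or.1 hdep with hφi | hψi
        · exact exists_sum_mul_shorter hφ hψ hφi
        · obtain ⟨ψ', φ', hψ', hφ', h⟩ := exists_sum_mul_shorter hψ hφ hψi
          exact ⟨φ', ψ', hφ', hψ', by simpa only [mul_comm] using h⟩
      obtain ⟨k, hk, φ'', ψ'', hrest⟩ := ih hφ' hψ'
      exact ⟨k, hk.trans n.le_succ, φ'', ψ'', h ▸ hrest⟩

end Rank

section WronskianFactorization

variable {σ K : Type*} [Field K] [CharZero K] [Finite σ] [LinearOrder σ] {k : ℕ} {s : σ}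

theorem exists_det_hasse_ne_zero_of_mem_supported {T : Set σ} {φ : Fin k → MvPolynomial σ K}
    (hφ : LinearIndependent K φ) (hT : ∀ j, φ j ∈ supported K T) :
    ∃ b : Fin k → σ →₀ ℕ, (∀ a, (b a).degree < k) ∧ (∀ a, ∀ i ∉ T, b a i = 0) ∧
      (Matrix.of fun a j => hasse (b a) (φ j)).det ≠ 0 := by
  obtain ⟨b, hb, hdet⟩ := exists_det_hasse_ne_zero hφ
  rw [Fintype.card_fin] at hb
  refine ⟨b, hb, fun a i hi => by_contra fun h => ?_, hdet⟩
  refine hdet (Matrix.det_eq_zero_of_row_eq_zero a ?_)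
  exact fun j => hasse_eq_zero_of_mem_supported (hT j) hi h

theorem det_hasse_single_ne_zero {ψ : Fin k → MvPolynomial σ K}
    (hψ : LinearIndependent K ψ) (hs : ∀ j, ψ j ∈ supported K {s}) :
    (Matrix.of fun a j : Fin k => hasse (.single s (a : ℕ)) (ψ j)).det ≠ 0 := by
  obtain ⟨c, hc, hcs, hdet⟩ := exists_det_hasse_ne_zero_of_mem_supported hψ hs
  have hsingle (a) : c a = .single s (c a s) := by
    ext i
    rcases eq_or_ne i s with rfl | hi
    · rw [Finsupp.single_eq_same]
    · rw [Finsupp.single_eq_of_ne hi, hcs a i hi]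
  let f (a : Fin k) : Fin k := ⟨c a s, (Finsupp.le_degree s (c a)).trans_lt (hc a)⟩
  have hf : Function.Injective f := fun a a' h => by
    by_contra hne
    refine hdet (Matrix.det_zero_of_row_eq hne (funext fun j => ?_))
    have := congrArg Fin.val h
    change hasse (c a) (ψ j) = hasse (c a') (ψ j)
    rw [hsingle a, hsingle a', show c a s = c a' s from this]
  let τ : Equiv.Perm (Fin k) := .ofBijective f (Finite.injective_iff_bijective.1 hf)
  intro hzero
  have := Matrix.det_permute τ (Matrix.of fun a j : Fin k => hasse (.single s (a : ℕ)) (ψ j))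
  rw [hzero, mul_zero] at this
  refine hdet (Eq.trans (congrArg Matrix.det (Matrix.ext fun a j => ?_)) this)
  change hasse (c a) (ψ j) = hasse (.single s (c a s)) (ψ j)
  rw [← hsingle]

theorem exists_det_hasse_eq_mul (s : σ) {P : MvPolynomial σ K} (hP : P ≠ 0) :
    ∃ k, 0 < k ∧ k ≤ degreeOf s P + 1 ∧ ∃ b : Fin k → σ →₀ ℕ,
      (∀ a, b a s = 0 ∧ (b a).degree < k) ∧ ∃ U ∈ supported K {s}ᶜ, ∃ V ∈ supported K {s},
        U * V ≠ 0 ∧ (Matrix.of fun a c : Fin k => hasse (b a + .single s (c : ℕ)) P).det =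
          U * V := by
  obtain ⟨p, hp, hsum⟩ := exists_eq_sum_mul_X_pow s P
  rw [← Fin.sum_univ_eq_sum_range (fun d => p d * X s ^ d)] at hsum
  obtain ⟨k, hk, φ, ψ, hφ, hψ, hφi, hψi, h⟩ := exists_linearIndependent_sum_mul (K := K)
    (U := Subalgebra.toSubmodule (supported K {s}ᶜ)) (V := Subalgebra.toSubmodule (supported K {s}))
    (fun d : Fin (degreeOf s P + 1) => hp d)
    fun d => pow_mem (X_mem_supported.2 (Set.mem_singleton s)) (d : ℕ)
  rw [← hsum] at h
  obtain ⟨b, hb, hbs, hU⟩ := exists_det_hasse_ne_zero_of_mem_supported hφi hφ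
  replace hbs (a) : b a s = 0 := hbs a s (by simp)
  have hV := det_hasse_single_ne_zero hψi hψ
  refine ⟨k, Nat.pos_of_ne_zero ?_, hk, b, fun a => ⟨hbs a, hb a⟩, _,
    ?_, _, ?_, mul_ne_zero hU hV, ?_⟩
  · rintro rfl
    exact hP (h.trans (Fin.sum_univ_zero _))
  · exact det_mem_supported fun a j => hasse_mem_supported (hφ j) _
  · exact det_mem_supported fun a j => hasse_mem_supported (hψ j) _
  · rw [← Matrix.det_transpose (Matrix.of fun a j : Fin k => hasse (.single s (a : ℕ)) (ψ j)),
      ← Matrix.det_mul]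
    refine congrArg Matrix.det (Matrix.ext fun a c => ?_)
    rw [Matrix.of_apply, h, map_sum]
    refine sum_congr rfl fun j _ => ?_
    rw [hasse_mul_of_mem_supported (hφ j) (hψ j), Finsupp.erase_add, Finsupp.erase_single, add_zero,
      Finsupp.erase_of_notMem_support (Finsupp.notMem_support_iff.2 (hbs a)), Finsupp.add_apply,
      hbs, zero_add, Finsupp.single_eq_same]
    rfl

end WronskianFactorization

section Univariate

theorem X_sub_C_pow_dvd_iff_hasseDeriv {R : Type*} [CommRing R] {p : Polynomial R} {a : R} {n : ℕ} :
    (Polynomial.X - Polynomial.C a) ^ n ∣ p ↔ ∀ j < n, (p.hasseDeriv j).eval a = 0 := by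
  simp only [Polynomial.X_sub_C_pow_dvd_iff, ← Polynomial.taylor_apply, Polynomial.X_pow_dvd_iff,
    Polynomial.taylor_coeff]

theorem isPrimitive_C_mul_X_add_C {a b : ℤ} (h : IsCoprime a b) :
    (Polynomial.C a * Polynomial.X + Polynomial.C b).IsPrimitive := by
  intro r hr
  rw [Polynomial.C_dvd_iff_dvd_coeff] at hr
  exact h.isUnit_of_dvd' (by
    simpa only [Polynomial.coeff_add, Polynomial.coeff_C_mul, Polynomial.coeff_X_one, mul_one,
      Polynomial.coeff_C_succ, add_zero] using hr 1) (by simpa using hr 0)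

theorem den_pow_dvd_leadingCoeff {p : Polynomial ℤ} {x : ℚ} {n : ℕ}
    (h : (Polynomial.X - Polynomial.C x) ^ n ∣ p.map (algebraMap ℤ ℚ)) :
    (x.den : ℤ) ^ n ∣ p.leadingCoeff := by
  have hden : (x.den : ℚ) ≠ 0 := Nat.cast_ne_zero.2 x.den_ne_zero
  set l : Polynomial ℤ := Polynomial.C (x.den : ℤ) * Polynomial.X + Polynomial.C (-x.num) with hl
  have hmap : l.map (algebraMap ℤ ℚ) =
      Polynomial.C (x.den : ℚ) * (Polynomial.X - Polynomial.C x) := by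
    rw [mul_sub, ← Polynomial.C_mul, Rat.den_mul_eq_num, hl]
    simp [sub_eq_add_neg]
  have hl1 : l.IsPrimitive := isPrimitive_C_mul_X_add_C <| .neg_right <|
    Int.isCoprime_iff_gcd_eq_one.2 <| x.reduced.symm
  have hprim : (l ^ n).IsPrimitive :=
    n.rec Polynomial.isPrimitive_one fun m hm => pow_succ l m ▸ hm.mul hl1
  have hdvd : l ^ n ∣ p := by
    rw [Polynomial.IsPrimitive.dvd_iff_fraction_map_dvd_fraction_map ℚ hprim, Polynomial.map_pow,
      hmap, mul_pow, (((Polynomial.isUnit_C.2 hden.isUnit).pow n).mul_left_dvd)]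
    exact h
  have := Polynomial.leadingCoeff_dvd_leadingCoeff hdvd
  rwa [Polynomial.leadingCoeff_pow,
    Polynomial.leadingCoeff_linear (Nat.cast_ne_zero.2 x.den_ne_zero)] at this

end Univariate

section SingleVariable

variable {σ R : Type*} [CommRing R] {s : σ}

theorem aeval_X_monomial (s : σ) (n : ℕ) (r : R) :
    Polynomial.aeval (X s : MvPolynomial σ R) (Polynomial.monomial n r) =
      monomial (Finsupp.single s n) r := by
  rw [Polynomial.aeval_monomial, algebraMap_eq, C_mul_X_pow_eq_monomial]

theorem coeff_single_aeval_X (s : σ) (p : Polynomial R) (n : ℕ) :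
    coeff (Finsupp.single s n) (Polynomial.aeval (X s) p) = p.coeff n := by
  classical
  induction p using Polynomial.induction_on' with
  | add p q hp hq => rw [map_add, coeff_add, hp, hq, Polynomial.coeff_add]
  | monomial m r =>
    rw [aeval_X_monomial, coeff_monomial, Polynomial.coeff_monomial]
    exact if_congr (Finsupp.single_injective s).eq_iff rfl rfl

theorem hasse_single_aeval_X [Finite σ] (s : σ) (j : ℕ) (p : Polynomial R) :
    hasse (Finsupp.single s j) (Polynomial.aeval (X s : MvPolynomial σ R) p) =
      Polynomial.aeval (X s) (p.hasseDeriv j) := by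
  classical
  cases nonempty_fintype σ
  induction p using Polynomial.induction_on' with
  | add p q hp hq => rw [map_add, map_add, hp, hq, map_add, map_add]
  | monomial n r =>
    have : multichoose (Finsupp.single s n) (Finsupp.single s j) = n.choose j := by
      rw [multichoose, Fintype.prod_eq_single s fun i hi => ?_]
      · rw [Finsupp.single_eq_same, Finsupp.single_eq_same]
      · rw [Finsupp.single_eq_of_ne hi, Finsupp.single_eq_of_ne hi, Nat.choose_zero_right]
    rw [Polynomial.hasseDeriv_monomial, aeval_X_monomial, aeval_X_monomial, hasse_monomial, this,
      ← Finsupp.single_tsub, mul_comm]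

theorem mem_supported_singleton {V : MvPolynomial σ R} :
    V ∈ supported R {s} ↔ ∃ v : Polynomial R, Polynomial.aeval (X s) v = V := by
  rw [supported_eq_adjoin_X, Set.image_singleton, Algebra.adjoin_singleton_eq_range_aeval]
  rfl

theorem degreeOf_divMonomial_le (i : σ) (W : MvPolynomial σ R) (a : σ →₀ ℕ) :
    degreeOf i (W.divMonomial a) ≤ degreeOf i W :=
  degreeOf_le_iff.2 fun e he => by
    rw [mem_support_iff, coeff_divMonomial] at he
    exact (Nat.le_add_left _ _).trans (degreeOf_le_iff.1 le_rfl (a + e) (mem_support_iff.2 he))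

theorem len_divMonomial_le (W : MvPolynomial σ ℤ) (a : σ →₀ ℕ) :
    len (W.divMonomial a) ≤ len W := by
  classical
  have hinj : Set.InjOn (a + ·) (W.divMonomial a).support := (add_right_injective a).injOn
  calc len (W.divMonomial a)
      = ∑ e ∈ (W.divMonomial a).support.image (a + ·), (coeff e W).natAbs := by
        rw [sum_image hinj]
        exact sum_congr rfl fun e _ => by rw [coeff_divMonomial]
    _ ≤ len W := by
        refine sum_le_sum_of_subset (image_subset_iff.2 fun e he => ?_)
        rwa [mem_support_iff, coeff_divMonomial, ← mem_support_iff] at he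

theorem divMonomial_mul_of_mem_supported {U : MvPolynomial σ R}
    (hU : U ∈ supported R {s}ᶜ) (v : Polynomial R) :
    (U * Polynomial.aeval (X s) v).divMonomial (Finsupp.single s v.natDegree) =
      v.leadingCoeff • U := by
  ext e
  rw [coeff_divMonomial, coeff_mul_of_mem_supported hU (mem_supported_singleton.2 ⟨v, rfl⟩),
    coeff_single_aeval_X, coeff_smul,
    Finsupp.erase_add, Finsupp.erase_single, zero_add, Finsupp.add_apply, Finsupp.single_eq_same,
    smul_eq_mul]
  rcases eq_or_ne (e s) 0 with h | h
  · rw [h, Finsupp.erase_of_notMem_support (Finsupp.notMem_support_iff.2 h), mul_comm]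
    rfl
  · rw [coeff_eq_zero_of_mem_supported hU (i := s) (by simp) h, mul_zero,
      Polynomial.coeff_eq_zero_of_natDegree_lt (by omega), mul_zero]

end SingleVariable

section Peel

variable {σ : Type*} {s : σ}

theorem eval_hasseDeriv_rootMultiplicity_ne_zero {K : Type*} [Field K] {v : Polynomial K}
    (hv : v ≠ 0) (a : K) : (v.hasseDeriv (v.rootMultiplicity a)).eval a ≠ 0 := fun h => by
  refine Polynomial.pow_rootMultiplicity_not_dvd hv a (X_sub_C_pow_dvd_iff_hasseDeriv.2 ?_)
  intro j hj
  rcases Nat.lt_succ_iff_lt_or_eq.1 hj with hj | rfl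
  · exact X_sub_C_pow_dvd_iff_hasseDeriv.1 (v.pow_rootMultiplicity_dvd a) j hj
  · exact h

theorem den_pow_le_len {W : MvPolynomial σ ℤ} {U : MvPolynomial σ ℚ} (hU : U ∈ supported ℚ {s}ᶜ)
    (hU0 : U ≠ 0) {v : Polynomial ℚ} (hv0 : v ≠ 0)
    (h : map (algebraMap ℤ ℚ) W = U * Polynomial.aeval (X s) v) {x : ℚ} {j : ℕ}
    (hj : (Polynomial.X - Polynomial.C x) ^ j ∣ v) : x.den ^ j ≤ len W := by
  obtain ⟨e, he⟩ := ne_zero_iff.1 hU0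
  have hes : e s = 0 := by_contra fun h => he (coeff_eq_zero_of_mem_supported hU (by simp) h)
  have hcoeff (n : ℕ) : ((coeff (e + .single s n) W : ℤ) : ℚ) = coeff e U * v.coeff n := by
    have := congrArg (coeff (e + .single s n)) h
    rwa [coeff_map, coeff_mul_of_mem_supported hU (mem_supported_singleton.2 ⟨v, rfl⟩),
      Finsupp.erase_add, Finsupp.erase_single, add_zero, Finsupp.add_apply, hes, zero_add,
      Finsupp.erase_of_notMem_support (Finsupp.notMem_support_iff.2 hes), Finsupp.single_eq_same,
      coeff_single_aeval_X] at this
  let p : Polynomial ℤ :=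
    ∑ n ∈ range (v.natDegree + 1), Polynomial.monomial n (coeff (e + .single s n) W)
  have hp : p.map (algebraMap ℤ ℚ) = Polynomial.C (coeff e U) * v := by
    conv_rhs => rw [v.as_sum_range, mul_sum]
    simp [p, Polynomial.map_sum, hcoeff, Polynomial.C_mul_monomial]
  have hp0 : p ≠ 0 := by
    rintro h0
    rw [h0, Polynomial.map_zero] at hp
    exact mul_ne_zero (Polynomial.C_ne_zero.2 he) hv0 hp.symm
  have hlead : p.leadingCoeff.natAbs ≤ len W := by
    simp only [Polynomial.leadingCoeff, p, Polynomial.finsetSum_coeff, Polynomial.coeff_monomial,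
      sum_ite_eq']
    split_ifs
    · exact natAbs_coeff_le_len _ _
    · exact Nat.zero_le _
  have hdvd := den_pow_dvd_leadingCoeff (hp ▸ hj.mul_left (Polynomial.C (coeff e U)))
  refine (Nat.le_of_dvd (Int.natAbs_pos.2 (Polynomial.leadingCoeff_ne_zero.2 hp0)) ?_).trans hlead
  simpa [Int.natAbs_pow] using Int.natAbs_dvd_natAbs.2 hdvd

variable [Finite σ] {w : σ → ℝ} {e : ℝ}

theorem hasIndexGE_map_iff {W : MvPolynomial σ ℤ} {x : σ → ℚ} :
    HasIndexGE x w e (map (algebraMap ℤ ℚ) W) ↔ HasIndexGE x w e W :=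
  forall₂_congr fun i _ => by rw [← map_hasse, aeval_map_algebraMap]

theorem HasIndexGE.of_mul {K : Type*} [Field K] {x : σ → K} {U V : MvPolynomial σ K}
    (hU : U ∈ supported K {s}ᶜ) (hV : V ∈ supported K {s}) (h : HasIndexGE x w e (U * V)) {j : ℕ}
    (hj : aeval x (hasse (Finsupp.single s j) V) ≠ 0) :
    HasIndexGE x w (e - j * w s) U := fun i hi => by
  by_cases his : i s = 0
  · have hdiff : aeval x (hasse (i + Finsupp.single s j) (U * V)) = 0 :=
      h _ (by rw [map_add, Finsupp.weight_single, nsmul_eq_mul]; linarith)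
    rw [hasse_mul_of_mem_supported hU hV, map_mul, Finsupp.erase_add, Finsupp.erase_single,
      add_zero, Finsupp.erase_of_notMem_support (Finsupp.notMem_support_iff.2 his),
      Finsupp.add_apply, his, zero_add, Finsupp.single_eq_same] at hdiff
    exact (mul_eq_zero.1 hdiff).resolve_right hj
  · rw [hasse_eq_zero_of_mem_supported hU (i := s) (by simp) his, map_zero]

theorem exists_peel {W : MvPolynomial σ ℤ} {U V : MvPolynomial σ ℚ} (hU : U ∈ supported ℚ {s}ᶜ)
    (hV : V ∈ supported ℚ {s}) (hUV : U * V ≠ 0) (h : map (algebraMap ℤ ℚ) W = U * V)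
    {x : σ → ℚ} (hx : HasIndexGE x w e W) :
    ∃ (Q : MvPolynomial σ ℤ) (j : ℕ), Q ≠ 0 ∧ degreeOf s Q = 0 ∧
      (∀ i, degreeOf i Q ≤ degreeOf i W) ∧ len Q ≤ len W ∧ (x s).den ^ j ≤ len W ∧
      HasIndexGE x w (e - j * w s) Q := by
  obtain ⟨v, rfl⟩ := mem_supported_singleton.1 hV
  have hU0 := left_ne_zero_of_mul hUV
  have hv0 : v ≠ 0 := fun h => right_ne_zero_of_mul hUV (by rw [h, map_zero])
  let Q := W.divMonomial (.single s v.natDegree)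
  let j := v.rootMultiplicity (x s)
  have hQ : map (algebraMap ℤ ℚ) Q = v.leadingCoeff • U := by
    rw [← divMonomial_mul_of_mem_supported hU, ← h]
    ext a
    simp only [Q, coeff_map, coeff_divMonomial]
  have hQU : v.leadingCoeff • U ∈ supported ℚ {s}ᶜ := Subalgebra.smul_mem _ hU _
  have hQ0 : v.leadingCoeff • U ≠ 0 := smul_ne_zero (Polynomial.leadingCoeff_ne_zero.2 hv0) hU0
  refine ⟨Q, j, fun h => hQ0 (by rw [← hQ, h, map_zero]), ?_, fun i => degreeOf_divMonomial_le ..,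
    len_divMonomial_le .., den_pow_le_len hU hU0 hv0 h (v.pow_rootMultiplicity_dvd (x s)), ?_⟩
  · refine Nat.le_zero.1 (degreeOf_le_iff.2 fun a ha => (by_contra fun has => ?_))
    have := coeff_eq_zero_of_mem_supported hQU (i := s) (by simp) (mt Nat.le_zero.2 has)
    rw [← hQ, coeff_map] at this
    exact mem_support_iff.1 ha ((algebraMap ℤ ℚ).injective_int (this.trans (map_zero _).symm))
  · have hxUV := hasIndexGE_map_iff.2 hx
    rw [h] at hxUV
    rw [← hasIndexGE_map_iff, hQ]
    refine fun i hi => ?_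
    rw [map_smul, map_smul, hxUV.of_mul hU hV ?_ i hi, smul_zero]
    rw [hasse_single_aeval_X, ← Polynomial.aeval_algHom_apply, aeval_X]
    exact eval_hasseDeriv_rootMultiplicity_ne_zero hv0 (x s)

end Peel

section RothLemma

theorem le_sum_max_sub {k D : ℕ} (hk : k ≤ D + 1) (hD : 1 ≤ D) {δ w : ℝ} (hδ : 0 ≤ δ) (hδ1 : δ ≤ 1)
    (hw : w * D ≤ 1) : k * δ ^ 2 / 8 ≤ ∑ c : Fin k, max 0 (δ - c * w) := by
  set n := min k (⌊δ * D / 2⌋₊ + 1) with hn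
  have hkD : (k : ℝ) ≤ 2 * D := by
    have : (1 : ℝ) ≤ D := by exact_mod_cast hD
    have : (k : ℝ) ≤ D + 1 := by exact_mod_cast hk
    linarith
  have hcount : k * δ / 4 ≤ n := by
    rw [hn, Nat.cast_min, le_min_iff]
    constructor
    · nlinarith [Nat.cast_nonneg (α := ℝ) k]
    · push_cast
      nlinarith [Nat.lt_floor_add_one (δ * D / 2)]
  have hterm : ∀ c ∈ range n, δ / 2 ≤ max 0 (δ - c * w) := fun c hc => by
    have hc' : (c : ℝ) ≤ δ * D / 2 := (Nat.le_floor_iff (by positivity)).1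
      (Nat.lt_succ_iff.1 ((mem_range.1 hc).trans_le (min_le_right _ _)))
    refine le_max_of_le_right ?_
    rcases le_total w 0 with hw0 | hw0
    · nlinarith [Nat.cast_nonneg (α := ℝ) c]
    · nlinarith
  calc k * δ ^ 2 / 8 = k * δ / 4 * (δ / 2) := by ring
    _ ≤ n * (δ / 2) := by gcongr
    _ ≤ ∑ c ∈ range n, max 0 (δ - c * w) := by
      simpa using card_nsmul_le_sum _ _ _ hterm
    _ ≤ ∑ c ∈ range k, max 0 (δ - c * w) :=
      sum_le_sum_of_subset_of_nonneg (range_mono (min_le_left _ _)) fun _ _ _ => le_max_left _ _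
    _ = ∑ c : Fin k, max 0 (δ - c * w) := (Fin.sum_univ_eq_sum_range _ k).symm

variable {σ : Type*} [LinearOrder σ]

/-- The hypotheses of Roth's lemma on the degrees `D`, the weights `w` and the points `x`: degrees
decrease by factors `≥ G`, and the heights `den (x i) ^ D i` are at least `B ^ (G * N)`, where `N`
bounds all degrees. -/
structure Separated (G B N : ℕ) (D : σ → ℕ) (w : σ → ℝ) (x : σ → ℚ) : Prop where
  one_le : ∀ i, 1 ≤ D i
  le : ∀ i, D i ≤ N
  nonneg : 0 ≤ w
  weight_mul_le : ∀ i, w i * D i ≤ 1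
  decay : ∀ i j, i < j → G * D j ≤ D i
  height : ∀ i, B ^ (G * N) ≤ (x i).den ^ D i

variable {G B N k m : ℕ} {D : σ → ℕ} {w : σ → ℝ} {x : σ → ℚ}

theorem Separated.scale (h : Separated G B N D w x) {G' : ℕ} (hm : 1 ≤ m) (hG : m * G' ≤ G)
    (hB : 1 ≤ B) (hk : 0 < k) :
    Separated G' (B ^ m) (k * N) (fun i => k * D i) ((k : ℝ)⁻¹ • w) x where
  one_le i := Nat.mul_pos hk (h.one_le i)
  le i := Nat.mul_le_mul_left k (h.le i)
  nonneg := smul_nonneg (by positivity) h.nonneg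
  weight_mul_le i := by
    have : (k : ℝ) ≠ 0 := by positivity
    rw [Pi.smul_apply, smul_eq_mul, Nat.cast_mul, mul_mul_mul_comm, inv_mul_cancel₀ this, one_mul]
    exact h.weight_mul_le i
  decay i j hij := by
    rw [mul_left_comm]
    refine Nat.mul_le_mul_left k (le_trans (Nat.mul_le_mul_right _ ?_) (h.decay i j hij))
    exact (Nat.le_mul_of_pos_left _ hm).trans hG
  height i := calc
    (B ^ m) ^ (G' * (k * N)) = B ^ (m * G' * N * k) := by rw [← pow_mul]; ring_nf
    _ ≤ B ^ (G * N * k) := Nat.pow_le_pow_right hB (by gcongr)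
    _ ≤ (x i).den ^ (k * D i) := by
      rw [pow_mul, mul_comm k, pow_mul _ (D i)]
      exact Nat.pow_le_pow_left (h.height i) k

theorem mem_supported_of_degreeOf_eq_zero {P Q : MvPolynomial σ ℤ} {s : σ} {T : Finset σ}
    (hP : P ∈ supported ℤ ((insert s T : Finset σ) : Set σ)) (hs : degreeOf s Q = 0)
    (h : ∀ i, degreeOf i Q ≤ degreeOf i P) : Q ∈ supported ℤ (T : Set σ) :=
  mem_supported_iff_degreeOf.2 fun i hi => by
    rcases eq_or_ne i s with rfl | his
    · exact hs
    · refine Nat.le_zero.1 ((h i).trans (mem_supported_iff_degreeOf.1 hP i ?_).le)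
      rw [mem_coe, mem_insert, not_or]
      exact ⟨his, hi⟩

theorem Separated.mul_weight_mul_le (h : Separated G B N D w x) (hB : 2 ≤ B) {s : σ} {j : ℕ}
    (hj : (x s).den ^ j ≤ (B ^ m) ^ (k * N)) : j * w s * G ≤ m * k := by
  have hN : 0 < N := (h.one_le s).trans (h.le s)
  have hpow : B ^ (G * N * j) ≤ B ^ (m * (k * N) * D s) := calc
    B ^ (G * N * j) ≤ ((x s).den ^ D s) ^ j := by
      rw [pow_mul]
      exact Nat.pow_le_pow_left (h.height s) j
    _ = ((x s).den ^ j) ^ D s := by rw [← pow_mul, ← pow_mul, mul_comm]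
    _ ≤ B ^ (m * (k * N) * D s) := by
      rw [pow_mul, pow_mul B m]
      exact Nat.pow_le_pow_left hj _
  have hle : G * j ≤ m * k * D s := by
    have := (Nat.pow_le_pow_iff_right hB).1 hpow
    nlinarith
  have hle' : (G * j : ℝ) ≤ m * k * D s := by exact_mod_cast hle
  calc j * w s * G = w s * (G * j) := by ring
    _ ≤ w s * (m * k * D s) := mul_le_mul_of_nonneg_left hle' (h.nonneg s)
    _ = m * k * (w s * D s) := by ring
    _ ≤ m * k := mul_le_of_le_one_right (by positivity) (h.weight_mul_le s)

theorem Separated.mul_weight_le (h : Separated G B N D w x) (hB : 2 ≤ B) (hm : 0 < m)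
    {s : σ} {j : ℕ} (hj : (x s).den ^ j ≤ (B ^ m) ^ (k * N)) {t : ℝ} (ht : 0 ≤ t) (hG : m ≤ G * t) :
    j * w s ≤ k * t := by
  have hjw : 0 ≤ j * w s := mul_nonneg (Nat.cast_nonneg _) (h.nonneg s)
  refine le_of_mul_le_mul_right ?_ (Nat.cast_pos.2 hm : (0 : ℝ) < m)
  calc j * w s * m ≤ j * w s * (G * t) := mul_le_mul_of_nonneg_left hG hjw
    _ = j * w s * G * t := by ring
    _ ≤ m * k * t := mul_le_mul_of_nonneg_right (h.mul_weight_mul_le hB hj) ht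
    _ = k * t * m := by ring

theorem Separated.len_det_hasse_le [Fintype σ] (h : Separated G B N D w x) (hB : 2 ≤ B) {s : σ}
    {P : MvPolynomial σ ℤ} (hPD : ∀ i, degreeOf i P ≤ D i) (hPB : len P ≤ B ^ N) (hk : k ≤ D s + 1)
    (b : Fin k → Fin k → σ →₀ ℕ) :
    len (Matrix.of fun a c => hasse (b a c) P).det ≤ (B ^ (Fintype.card σ + 2)) ^ (k * N) := by
  have hentry (a c : Fin k) : len (hasse (b a c) P) ≤ 2 ^ (∑ i, D i) * B ^ N :=
    (len_hasse_le hPD _).trans (Nat.mul_le_mul_left _ hPB)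
  have hkN : k ≤ 2 ^ N :=
    (hk.trans (Nat.succ_le_succ (h.le s))).trans (Nat.succ_le_of_lt Nat.lt_two_pow_self)
  have hD : ∑ i, D i ≤ Fintype.card σ * N := sum_le_card_nsmul _ _ _ fun i _ => h.le i
  refine (len_det_le hentry).trans ?_
  rw [Fintype.card_fin, mul_comm k N, pow_mul]
  refine Nat.pow_le_pow_left ?_ k
  calc k * (2 ^ (∑ i, D i) * B ^ N) ≤ B ^ N * (B ^ (Fintype.card σ * N) * B ^ N) := by
        refine Nat.mul_le_mul (hkN.trans (Nat.pow_le_pow_left hB N)) (Nat.mul_le_mul_right _ ?_)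
        exact (Nat.pow_le_pow_right two_pos hD).trans (Nat.pow_le_pow_left hB _)
    _ = (B ^ (Fintype.card σ + 2)) ^ N := by ring

theorem Separated.hasIndexGE_entry [Finite σ] (h : Separated G B N D w x) {s : σ} {T : Finset σ}
    (hT : ∀ i ∈ T, i < s) {η : ℝ} (hη : 0 < η) (hG : 2 / η ≤ G) {P : MvPolynomial σ ℤ}
    (hP : P ∈ supported ℤ ((insert s T : Finset σ) : Set σ)) (hx : HasIndexGE x w η P)
    {b : σ →₀ ℕ} (hbs : b s = 0) (hb : b.degree ≤ D s) (c : ℕ) :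
    HasIndexGE x w (max 0 (η / 2 - c * w s)) (hasse (b + Finsupp.single s c) P) := by
  rcases le_total (η / 2 - c * w s) 0 with hneg | hpos
  · rw [max_eq_left hneg]
    exact .of_nonpos h.nonneg le_rfl
  rw [max_eq_right hpos]
  by_cases hbT : ∃ i ∉ T, b i ≠ 0
  · obtain ⟨i, hi, hbi⟩ := hbT
    have his : i ≠ s := fun h => hbi (h ▸ hbs)
    have : hasse (b + Finsupp.single s c) P = 0 := hasse_eq_zero_of_mem_supported hP (i := i)
      (by simp [his, hi]) (by simp [hbi])
    rw [this]
    exact fun i _ => by rw [map_zero, map_zero]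
  · push Not at hbT
    have hweight : Finsupp.weight w b ≤ η / 2 := by
      have hterm : ∀ i ∈ b.support, b i • w i * (G * D s) ≤ b i := fun i hi => by
        have his : i < s := hT i (not_imp_comm.1 (hbT i) (Finsupp.mem_support_iff.1 hi))
        have hDi : (G * D s : ℝ) ≤ D i := by exact_mod_cast h.decay i s his
        rw [nsmul_eq_mul, mul_assoc]
        refine mul_le_of_le_one_right (Nat.cast_nonneg _) ?_
        exact (mul_le_mul_of_nonneg_left hDi (h.nonneg i)).trans (h.weight_mul_le i)
      have hbD : (b.degree : ℝ) ≤ D s := by exact_mod_cast hb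
      have hD : (0 : ℝ) < D s := by exact_mod_cast h.one_le s
      have hsum : Finsupp.weight w b * (G * D s) ≤ D s := by
        rw [Finsupp.weight_apply, Finsupp.sum, sum_mul]
        refine (sum_le_sum hterm).trans (le_trans ?_ hbD)
        rw [Finsupp.degree_apply, Nat.cast_sum]
      have hGη : 2 ≤ G * η := (div_le_iff₀ hη).1 hG
      have hweightG : Finsupp.weight w b * G ≤ 1 := by
        rw [← mul_assoc] at hsum
        exact le_of_mul_le_mul_right (by rwa [one_mul]) hD
      nlinarith [weight_nonneg h.nonneg b]
    refine (hasIndexGE_hasse hx (b + Finsupp.single s c)).mono ?_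
    rw [map_add, Finsupp.weight_single, nsmul_eq_mul]
    linarith

theorem Separated.exists_det [Fintype σ] (h : Separated G B N D w x) (hB : 2 ≤ B) {s : σ}
    {T : Finset σ} (hT : ∀ i ∈ T, i < s) {η : ℝ} (hη : 0 < η) (hη1 : η ≤ 1) (hG : 2 / η ≤ G)
    {P : MvPolynomial σ ℤ} (hP0 : P ≠ 0) (hP : P ∈ supported ℤ ((insert s T : Finset σ) : Set σ))
    (hPD : ∀ i, degreeOf i P ≤ D i) (hPB : len P ≤ B ^ N) (hx : HasIndexGE x w η P) :
    ∃ k, 0 < k ∧ ∃ W : MvPolynomial σ ℤ,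
      (∃ U ∈ supported ℚ {s}ᶜ, ∃ V ∈ supported ℚ {s}, U * V ≠ 0 ∧
        map (algebraMap ℤ ℚ) W = U * V) ∧
      W ∈ supported ℤ ((insert s T : Finset σ) : Set σ) ∧ (∀ i, degreeOf i W ≤ k * D i) ∧
      len W ≤ (B ^ (Fintype.card σ + 2)) ^ (k * N) ∧ HasIndexGE x w (k * (η ^ 2 / 32)) W := by
  have hinj : Function.Injective (algebraMap ℤ ℚ) := Int.cast_injective
  have hP0' : map (algebraMap ℤ ℚ) P ≠ 0 := (map_ne_zero_iff _ (map_injective _ hinj)).2 hP0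
  obtain ⟨k, hk, hkD, b, hb, U, hU, V, hV, hUV, hdet⟩ := exists_det_hasse_eq_mul s hP0'
  replace hkD : k ≤ D s + 1 := by
    rw [degreeOf_def, degrees_map_of_injective _ hinj, ← degreeOf_def] at hkD
    exact hkD.trans (Nat.succ_le_succ (hPD s))
  set M : Matrix (Fin k) (Fin k) (MvPolynomial σ ℤ) :=
    .of fun a c => hasse (b a + Finsupp.single s (c : ℕ)) P with hM
  refine ⟨k, hk, M.det, ⟨U, hU, V, hV, hUV, ?_⟩, ?_, fun i => ?_, ?_, ?_⟩
  · rw [← hdet, RingHom.map_det]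
    refine congrArg Matrix.det (Matrix.ext fun a c => ?_)
    rw [RingHom.mapMatrix_apply, Matrix.map_apply, hM, Matrix.of_apply, Matrix.of_apply, map_hasse]
  · exact det_mem_supported (M := M) fun a c => hasse_mem_supported hP _
  · simpa only [Fintype.card_fin] using
      degreeOf_det_le (M := M) fun a c => (degreeOf_hasse_le _ _ _).trans (hPD i)
  · exact h.len_det_hasse_le hB hPD hPB hkD _
  · refine (HasIndexGE.det h.nonneg fun a c => h.hasIndexGE_entry hT hη hG hP hx (hb a).1
      (Nat.lt_succ_iff.1 ((hb a).2.trans_le hkD)) c).mono ?_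
    have := le_sum_max_sub hkD (h.one_le s) (half_pos hη).le (by linarith) (h.weight_mul_le s)
    linarith

/-- Roth's lemma, by induction on the number of variables: a generalized Wronskian of `P` in the
largest variable `X s` factors as `U * V` with `V` in `X s` alone. A large index of `V` at `x s`
would force a large power of `den (x s)` to divide its leading coefficient, so the index is carried
by `U`, which has one variable fewer. -/
theorem exists_not_hasIndexGE_of_separated [Finite σ] (T : Finset σ) {η : ℝ}
    (hη : 0 < η) (hη1 : η ≤ 1) :
    ∃ G : ℕ, ∀ {B N : ℕ} {D : σ → ℕ} {w : σ → ℝ} {x : σ → ℚ} {P : MvPolynomial σ ℤ}, 2 ≤ B →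
      Separated G B N D w x → P ≠ 0 → P ∈ supported ℤ (T : Set σ) → (∀ i, degreeOf i P ≤ D i) →
      len P ≤ B ^ N → ¬ HasIndexGE x w η P := by
  cases nonempty_fintype σ
  induction T using Finset.induction_on_max generalizing η with
  | empty =>
    refine ⟨0, fun _ _ hP0 hP _ _ hx => hP0 ?_⟩
    rw [coe_empty, supported_empty] at hP
    obtain ⟨r, rfl⟩ := Algebra.mem_bot.1 hP
    have := hx 0 (by rwa [map_zero])
    rw [hasse_zero_apply, algebraMap_eq, aeval_C, eq_intCast, Int.cast_eq_zero] at this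
    rw [this, map_zero]
  | insert s T hT ih =>
    obtain ⟨G', hG'⟩ := ih (η := η ^ 2 / 64) (by positivity) (by nlinarith)
    set m := Fintype.card σ + 2
    obtain ⟨G, hG⟩ := exists_nat_ge (max ((m * G' : ℕ) : ℝ) (64 * m / η ^ 2))
    have hGG' : m * G' ≤ G := Nat.cast_le.1 ((le_max_left _ _).trans hG)
    have hGη : 64 * m ≤ G * η ^ 2 := (div_le_iff₀ (by positivity)).1 ((le_max_right _ _).trans hG)
    refine ⟨G, fun {B N D w x P} hB h hP0 hP hPD hPB hx => ?_⟩
    have hm2 : (2 : ℝ) ≤ m := by exact_mod_cast Nat.le_add_left 2 _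
    have h2G : 2 / η ≤ G := by rw [div_le_iff₀ hη]; nlinarith
    obtain ⟨k, hk, W, ⟨U, hU, V, hV, hUV, hW⟩, hWT, hWD, hWB, hWx⟩ :=
      h.exists_det hB hT hη hη1 h2G hP0 hP hPD hPB hx
    obtain ⟨Q, j, hQ0, hQs, hQD, hQB, hj, hQx⟩ := exists_peel hU hV hUV hW hWx
    have hk' : (0 : ℝ) < k := by exact_mod_cast hk
    have hjw : j * w s ≤ k * (η ^ 2 / 64) :=
      h.mul_weight_le hB (by omega) (hj.trans hWB) (by positivity) (by linarith)
    refine hG' (B := B ^ m) (le_trans hB (Nat.le_self_pow (by omega) B))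
      (h.scale (by omega) hGG' (by omega) hk) hQ0
      (mem_supported_of_degreeOf_eq_zero hWT hQs hQD) (fun i => (hQD i).trans (hWD i))
      (hQB.trans hWB) ((hQx.smul_weight (inv_pos.2 hk')).mono ?_)
    rw [← div_eq_inv_mul, le_div_iff₀ hk', mul_comm, le_sub_iff_add_le]
    linarith

end RothLemma

section Counting

theorem sum_exp_neg_mul_le {D : ℕ} {w : ℝ} (hw : 0 ≤ w) (hwD : w * D ≤ 1) (r : ℝ) :
    ∑ c : Fin (D + 1), Real.exp (-(r * (c * w))) ≤
      (D + 1) * Real.exp (r ^ 2 / 8 - r * (w * D / 2)) := by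
  -- Reflecting `c` to `D - c` pairs the exponentials into a hyperbolic cosine.
  have hpair (c : Fin (D + 1)) :
      Real.exp (-(r * (c * w))) + Real.exp (-(r * (c.rev * w))) ≤
        2 * Real.exp (r ^ 2 / 8 - r * (w * D / 2)) := by
    have hrev : (c.rev : ℝ) = D - c := by
      rw [Fin.val_rev, Nat.cast_sub (by omega)]
      push_cast
      ring
    have : (c : ℝ) ≤ D := by exact_mod_cast c.is_le
    obtain ⟨y, hy⟩ : ∃ y, y = r * w * (D / 2 - c) := ⟨_, rfl⟩
    have hy2 : y ^ 2 / 2 ≤ r ^ 2 / 8 := by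
      have hy_abs : |w * (D / 2 - c)| ≤ 1 / 2 := by
        have : 0 ≤ w * c := by positivity
        rw [abs_le]
        constructor <;> nlinarith
      calc y ^ 2 / 2 = r ^ 2 * |w * (D / 2 - c)| ^ 2 / 2 := by rw [sq_abs, hy]; ring
        _ ≤ r ^ 2 * (1 / 2) ^ 2 / 2 := by gcongr
        _ = r ^ 2 / 8 := by ring
    calc Real.exp (-(r * (c * w))) + Real.exp (-(r * (c.rev * w)))
        = 2 * (Real.exp (-(r * (w * D / 2))) * Real.cosh y) := by
          rw [Real.cosh_eq, mul_div_assoc', mul_div_cancel₀ _ two_ne_zero, mul_add,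
            ← Real.exp_add, ← Real.exp_add, hrev, hy]
          congr 2 <;> ring
      _ ≤ 2 * (Real.exp (-(r * (w * D / 2))) * Real.exp (r ^ 2 / 8)) := by
          gcongr
          exact (Real.cosh_le_exp_half_sq y).trans (Real.exp_le_exp.2 hy2)
      _ = _ := by rw [← Real.exp_add, neg_add_eq_sub]
  have hsum := sum_le_sum fun c (_ : c ∈ (univ : Finset (Fin (D + 1)))) => hpair c
  have hrevsum := Equiv.sum_comp Fin.revPerm fun c : Fin (D + 1) => Real.exp (-(r * (c * w)))
  simp only [Fin.revPerm_apply] at hrevsum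
  rw [sum_add_distrib, hrevsum, sum_const, card_univ, Fintype.card_fin, nsmul_eq_mul] at hsum
  push_cast at hsum
  linarith

/-- Chernoff's method: the indicator of `∑ e s * w s < t` is at most `exp (r (t - ∑ e s * w s))`,
whose sum over the box factors; `r = 4 * η` is the optimal parameter. -/
theorem card_weight_lt_le {σ : Type*} [Fintype σ] [DecidableEq σ] {D : σ → ℕ} {w : σ → ℝ}
    (hw : 0 ≤ w) (hwD : ∀ s, w s * D s ≤ 1) {η t : ℝ} (hη : 0 ≤ η)
    (ht : t + η * Fintype.card σ ≤ ∑ s, w s * D s / 2) :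
    (#{e : ∀ s, Fin (D s + 1) | ∑ s, e s * w s < t} : ℝ) ≤
      Real.exp (-(2 * η ^ 2 * Fintype.card σ)) * ∏ s, (D s + 1 : ℝ) := by
  set r := 4 * η
  calc (#{e : ∀ s, Fin (D s + 1) | ∑ s, e s * w s < t} : ℝ)
      ≤ ∑ e : ∀ s, Fin (D s + 1), Real.exp (r * (t - ∑ s, e s * w s)) := by
        rw [card_eq_sum_ones, Nat.cast_sum, sum_filter]
        refine sum_le_sum fun e _ => ?_
        split_ifs with he
        · rw [Nat.cast_one]
          exact Real.one_le_exp (mul_nonneg (by positivity) (sub_nonneg.2 he.le))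
        · exact Real.exp_nonneg _
    _ = Real.exp (r * t) * ∏ s, ∑ c : Fin (D s + 1), Real.exp (-(r * (c * w s))) := by
        rw [prod_univ_sum, Fintype.piFinset_univ, mul_sum]
        refine sum_congr rfl fun e _ => ?_
        rw [← Real.exp_sum, ← Real.exp_add, sum_neg_distrib, ← mul_sum]
        ring_nf
    _ ≤ Real.exp (r * t) * ∏ s, ((D s + 1) * Real.exp (r ^ 2 / 8 - r * (w s * D s / 2))) := by
        refine mul_le_mul_of_nonneg_left (prod_le_prod (fun s _ => ?_) fun s _ => ?_)
          (Real.exp_nonneg _)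
        · exact sum_nonneg fun c _ => Real.exp_nonneg _
        · exact sum_exp_neg_mul_le (hw s) (hwD s) r
    _ = Real.exp (r * (t - ∑ s, w s * D s / 2) + Fintype.card σ * (r ^ 2 / 8)) *
          ∏ s, (D s + 1 : ℝ) := by
        rw [prod_mul_distrib, ← Real.exp_sum, sum_sub_distrib, sum_const, card_univ,
          nsmul_eq_mul, ← mul_sum, mul_left_comm, ← Real.exp_add, mul_comm]
        congr 2
        ring
    _ ≤ Real.exp (-(2 * η ^ 2 * Fintype.card σ)) * ∏ s, (D s + 1 : ℝ) := by
        gcongr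
        nlinarith

end Counting

section Siegel

theorem exists_pow_eq_sum {S : Type*} [CommRing S] {c : S} (hc : IsIntegral ℤ c) :
    ∃ (n A : ℕ) (v : Fin n → S), ∀ j, ∃ a : Fin n → ℤ,
      c ^ j = ∑ l, a l • v l ∧ ∀ l, |a l| ≤ (A : ℤ) ^ (j + 1) := by
  obtain ⟨n, v, hv⟩ := Submodule.fg_iff_exists_fin_generating_family.1 hc.fg_adjoin_singleton
  have hmem (y : S) (hy : y ∈ Algebra.adjoin ℤ {c}) : ∃ u : Fin n → ℤ, ∑ l, u l • v l = y := by
    rw [← Submodule.mem_span_range_iff_exists_fun, hv]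
    exact hy
  have hvmem (l : Fin n) : v l ∈ Algebra.adjoin ℤ {c} := by
    rw [← Subalgebra.mem_toSubmodule, ← hv]
    exact Submodule.subset_span ⟨l, rfl⟩
  obtain ⟨u, hu⟩ := hmem 1 (one_mem _)
  choose M hM using fun l =>
    hmem (c * v l) (mul_mem (Algebra.self_mem_adjoin_singleton ℤ c) (hvmem l))
  refine ⟨n, ∑ l, (u l).natAbs + ∑ l, ∑ k, (M k l).natAbs, v, fun j => ?_⟩
  set A : ℕ := ∑ l, (u l).natAbs + ∑ l, ∑ k, (M k l).natAbs
  have huA (l : Fin n) : |u l| ≤ A := by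
    rw [Int.abs_eq_natAbs]
    exact Int.ofNat_le.2 ((single_le_sum (f := fun l => (u l).natAbs) (fun _ _ => Nat.zero_le _)
      (mem_univ l)).trans (Nat.le_add_right _ _))
  have hMA (l : Fin n) : ∑ k, |M k l| ≤ A := by
    simp only [Int.abs_eq_natAbs]
    exact_mod_cast (single_le_sum (f := fun l => ∑ k, (M k l).natAbs) (fun _ _ => Nat.zero_le _)
      (mem_univ l)).trans (Nat.le_add_left _ _)
  induction j with
  | zero => exact ⟨u, by rw [pow_zero, hu], fun l => by rw [zero_add, pow_one]; exact huA l⟩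
  | succ j ih =>
    obtain ⟨a, ha, haA⟩ := ih
    refine ⟨fun l => ∑ k, a k * M k l, ?_, fun l => ?_⟩
    · simp only [pow_succ, ha, sum_mul, sum_smul, mul_smul]
      rw [sum_comm]
      refine sum_congr rfl fun l _ => ?_
      rw [← smul_sum, hM, smul_mul_assoc, mul_comm]
    · calc |∑ k, a k * M k l| ≤ ∑ k, (A : ℤ) ^ (j + 1) * |M k l| := by
            refine (abs_sum_le_sum_abs _ _).trans (sum_le_sum fun k _ => ?_)
            rw [abs_mul]
            exact mul_le_mul_of_nonneg_right (haA k) (abs_nonneg _)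
        _ ≤ (A : ℤ) ^ (j + 1 + 1) := by
            rw [← mul_sum, pow_succ _ (j + 1)]
            exact mul_le_mul_of_nonneg_left (hMA l) (by positivity)

theorem exists_ne_zero_mulVec_eq_zero {α β : Type*} [Fintype α] [Fintype β] [Nonempty β]
    (A : Matrix α β ℤ) (h : 2 * Fintype.card α ≤ Fintype.card β) {H : ℕ} (hH : 1 ≤ H)
    (hA : ∀ i j, |A i j| ≤ H) :
    ∃ z : β → ℤ, z ≠ 0 ∧ A.mulVec z = 0 ∧ ∀ j, |z j| ≤ Fintype.card β * H := by
  classical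
  have hβ : 0 < Fintype.card β := Fintype.card_pos
  rcases (Fintype.card α).eq_zero_or_pos with hα | hα
  · have := Fintype.card_eq_zero_iff.1 hα
    refine ⟨1, one_ne_zero, Subsingleton.elim _ _, fun j => ?_⟩
    rw [Pi.one_apply, abs_one]
    exact_mod_cast Nat.mul_pos hβ hH
  let _ := Matrix.seminormedAddCommGroup (m := α) (n := β) (α := ℤ)
  obtain ⟨z, hz0, hz, hzn⟩ := Int.Matrix.exists_ne_zero_int_vec_norm_le A (by omega) hα
  refine ⟨z, hz0, hz, fun j => ?_⟩
  have hA' : max 1 ‖A‖ ≤ H := max_le (by exact_mod_cast hH) <|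
    (Matrix.norm_le_iff (by positivity)).2 fun i j => by
      rw [Int.norm_eq_abs]
      exact_mod_cast hA i j
  have hexp : (Fintype.card α : ℝ) / (Fintype.card β - Fintype.card α) ≤ 1 := by
    have : (2 * Fintype.card α : ℝ) ≤ Fintype.card β := by exact_mod_cast h
    have : (0 : ℝ) < Fintype.card α := by exact_mod_cast hα
    rw [div_le_one (by linarith)]
    linarith
  have hone : 1 ≤ Fintype.card β * max 1 ‖A‖ :=
    one_le_mul_of_one_le_of_one_le (by exact_mod_cast hβ) (le_max_left _ _)
  have hzj : ‖z j‖ ≤ Fintype.card β * H := calc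
    ‖z j‖ ≤ ‖z‖ := norm_le_pi_norm z j
    _ ≤ (Fintype.card β * max 1 ‖A‖) ^ (1 : ℝ) :=
      hzn.trans (Real.rpow_le_rpow_of_exponent_le hone hexp)
    _ ≤ Fintype.card β * H := by
      rw [Real.rpow_one]
      gcongr
  rw [Int.norm_eq_abs] at hzj
  exact_mod_cast hzj

variable {σ S : Type*} [Fintype σ] [CommRing S] {D : σ → ℕ}

/-- A point of the box `∏ s, [0, D s]` as an exponent vector; the box is a finite type so that it
can index the unknowns of a linear system. -/
noncomputable def boxExponent (e : ∀ s, Fin (D s + 1)) : σ →₀ ℕ :=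
  Finsupp.equivFunOnFinite.symm fun s => (e s : ℕ)

theorem boxExponent_injective :
    Function.Injective (boxExponent : (∀ s, Fin (D s + 1)) → σ →₀ ℕ) := fun _ _ h =>
  funext fun s => Fin.ext (DFunLike.congr_fun h s)

theorem multichoose_boxExponent_le (e : ∀ s, Fin (D s + 1)) (i : σ →₀ ℕ) :
    multichoose (boxExponent e) i ≤ 2 ^ (∑ s, D s) := by
  rw [← prod_pow_eq_pow_sum]
  exact prod_le_prod' fun s _ =>
    (Nat.choose_le_two_pow _ _).trans (Nat.pow_le_pow_right two_pos (e s).is_le)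

variable [DecidableEq σ]

/-- The polynomial with coefficient `z e` at each point `e` of the box; in Siegel's lemma the `z e`
are the unknowns. -/
noncomputable def boxPolynomial (z : (∀ s, Fin (D s + 1)) → ℤ) : MvPolynomial σ ℤ :=
  ∑ e, monomial (boxExponent e) (z e)

theorem coeff_boxPolynomial (z : (∀ s, Fin (D s + 1)) → ℤ) (e : ∀ s, Fin (D s + 1)) :
    coeff (boxExponent e) (boxPolynomial z) = z e := by
  rw [boxPolynomial, coeff_sum, sum_eq_single e, coeff_monomial, if_pos rfl]
  · intro f _ hf
    rw [coeff_monomial, if_neg (boxExponent_injective.ne hf)]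
  · exact fun h => absurd (mem_univ e) h

theorem degreeOf_boxPolynomial_le (z : (∀ s, Fin (D s + 1)) → ℤ) (s : σ) :
    degreeOf s (boxPolynomial z) ≤ D s := by
  refine (degreeOf_sum_le s _ _).trans (Finset.sup_le fun e _ => degreeOf_le_iff.2 fun f hf => ?_)
  rw [mem_singleton.1 (support_monomial_subset hf)]
  exact (e s).is_le

theorem len_boxPolynomial_le {A : ℕ} {z : (∀ s, Fin (D s + 1)) → ℤ}
    (hz : ∀ e, |z e| ≤ (∏ s, (D s + 1) : ℕ) * (2 ^ (∑ s, D s) * A ^ (∑ s, D s + 1) : ℕ)) :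
    len (boxPolynomial z) ≤ (8 * A) ^ (∑ s, D s + 1) := by
  set d := ∑ s, D s
  have hbox : ∏ s, (D s + 1) ≤ 2 ^ d := by
    rw [← prod_pow_eq_pow_sum]
    exact prod_le_prod' fun s _ => Nat.succ_le_of_lt Nat.lt_two_pow_self
  have hlen (e) : len (monomial (boxExponent e) (z e)) ≤ 2 ^ d * (2 ^ d * A ^ (d + 1)) := by
    have := hz e
    rw [Int.abs_eq_natAbs, ← Nat.cast_mul, Nat.cast_le] at this
    rw [len_monomial]
    exact this.trans (Nat.mul_le_mul_right _ hbox)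
  calc len (boxPolynomial z) ≤ (∏ s, (D s + 1)) * (2 ^ d * (2 ^ d * A ^ (d + 1))) := by
        refine (len_sum_le _ _).trans ((sum_le_card_nsmul _ _ _ fun e _ => hlen e).trans_eq ?_)
        rw [card_univ, Fintype.card_pi, smul_eq_mul]
        simp only [Fintype.card_fin]
    _ ≤ 2 ^ d * (2 ^ d * (2 ^ d * A ^ (d + 1))) := Nat.mul_le_mul_right _ hbox
    _ = 8 ^ d * A ^ (d + 1) := by
        rw [show 8 = 2 * 2 * 2 from rfl, mul_pow, mul_pow]
        ring
    _ ≤ (8 * A) ^ (d + 1) := by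
        rw [mul_pow]
        exact Nat.mul_le_mul_right _ (Nat.pow_le_pow_right (by norm_num) (Nat.le_succ d))

theorem aeval_hasse_boxPolynomial (c : S) (z : (∀ s, Fin (D s + 1)) → ℤ) (i : σ →₀ ℕ) :
    aeval (fun _ => c) (hasse i (boxPolynomial z)) =
      ∑ e, (z e * multichoose (boxExponent e) i) • c ^ (∑ s, (e s - i s)) := by
  rw [boxPolynomial, map_sum, map_sum]
  refine sum_congr rfl fun e _ => ?_
  rw [hasse_monomial, aeval_monomial, Finsupp.prod_fintype _ _ fun _ => pow_zero _,
    prod_pow_eq_pow_sum, Algebra.smul_def]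
  rfl

theorem hasIndexGE_boxPolynomial {n : ℕ} {c : S} {v : Fin n → S} {a : ℕ → Fin n → ℤ}
    (ha : ∀ j, c ^ j = ∑ l, a j l • v l) {w : σ → ℝ} {t : ℝ} {z : (∀ s, Fin (D s + 1)) → ℤ}
    (hz : ∀ (f : ∀ s, Fin (D s + 1)), ∑ s, f s * w s < t → ∀ l,
      ∑ e, multichoose (boxExponent e) (boxExponent f) * a (∑ s, (e s - f s)) l * z e = 0) :
    HasIndexGE (fun _ => c) w t (boxPolynomial z) := fun i hi => by
  by_cases hiD : ∀ s, i s < D s + 1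
  · obtain ⟨f, rfl⟩ : ∃ f : ∀ s, Fin (D s + 1), boxExponent f = i :=
      ⟨fun s => ⟨i s, hiD s⟩, Finsupp.ext fun _ => rfl⟩
    have hft : ∑ s, f s * w s < t := by
      refine lt_of_eq_of_lt ?_ hi
      rw [Finsupp.weight_eq_sum]
      exact sum_congr rfl fun s _ => (nsmul_eq_mul _ _).symm
    simp only [aeval_hasse_boxPolynomial, ha, smul_sum, smul_smul]
    rw [sum_comm]
    refine sum_eq_zero fun l _ => ?_
    rw [← sum_smul, ← zero_smul ℤ (v l), ← hz f hft l]
    exact congrArg (· • v l) (sum_congr rfl fun e _ => by rw [mul_comm (z e), mul_right_comm]; rfl)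
  · push Not at hiD
    obtain ⟨s, hs⟩ := hiD
    rw [hasse_eq_zero (s := s) ((degreeOf_boxPolynomial_le z s).trans_lt hs), map_zero]

theorem exists_hasIndexGE_of_card_le {n A : ℕ} (hA : 1 ≤ A) {c : S} {v : Fin n → S}
    {a : ℕ → Fin n → ℤ} (ha : ∀ j, c ^ j = ∑ l, a j l • v l)
    (haA : ∀ j l, |a j l| ≤ (A : ℤ) ^ (j + 1)) {w : σ → ℝ} {t : ℝ}
    (hcard : 2 * (#{e : ∀ s, Fin (D s + 1) | ∑ s, e s * w s < t} * n) ≤ ∏ s, (D s + 1)) :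
    ∃ P : MvPolynomial σ ℤ, P ≠ 0 ∧ (∀ s, degreeOf s P ≤ D s) ∧
      len P ≤ (8 * A) ^ (∑ s, D s + 1) ∧ HasIndexGE (fun _ => c) w t P := by
  set d := ∑ s, D s
  have hbox : Fintype.card (∀ s, Fin (D s + 1)) = ∏ s, (D s + 1) := by
    simp only [Fintype.card_pi, Fintype.card_fin]
  let M : Matrix ({f : ∀ s, Fin (D s + 1) // ∑ s, f s * w s < t} × Fin n)
    (∀ s, Fin (D s + 1)) ℤ := fun p e =>
    multichoose (boxExponent e) (boxExponent p.1.1) * a (∑ s, (e s - p.1.1 s)) p.2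
  have hM (p) (e) : |M p e| ≤ (2 ^ d * A ^ (d + 1) : ℕ) := by
    rw [abs_mul, Nat.abs_cast, Nat.cast_mul]
    refine mul_le_mul (Nat.cast_le.2 (multichoose_boxExponent_le e _)) ((haA _ _).trans ?_)
      (abs_nonneg _) (by positivity)
    exact_mod_cast Nat.pow_le_pow_right hA (Nat.succ_le_succ (sum_le_sum fun s _ =>
      (Nat.sub_le _ _).trans (e s).is_le))
  have hH : 1 ≤ 2 ^ d * A ^ (d + 1) := Nat.mul_pos (by positivity) (by positivity)
  obtain ⟨z, hz0, hz, hzM⟩ := exists_ne_zero_mulVec_eq_zero M (by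
    rwa [Fintype.card_prod, Fintype.card_fin, Fintype.card_subtype, hbox]) hH hM
  refine ⟨boxPolynomial z, ?_, degreeOf_boxPolynomial_le z, ?_, ?_⟩
  · obtain ⟨e, he⟩ := Function.ne_iff.1 hz0
    exact fun h => he (by rw [← coeff_boxPolynomial z e, h, coeff_zero]; rfl)
  · rw [hbox] at hzM
    exact len_boxPolynomial_le hzM
  · exact hasIndexGE_boxPolynomial ha fun f hf l => congrFun hz (⟨f, hf⟩, l)

end Siegel

section Bounds

variable {σ : Type*} [Fintype σ] {D : σ → ℕ} {P : MvPolynomial σ ℤ}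

theorem one_le_abs_aeval_mul_den_pow (hD : ∀ s, degreeOf s P ≤ D s) {x : σ → ℚ}
    (h : aeval x P ≠ 0) : 1 ≤ |aeval x P| * ∏ s, ((x s).den : ℚ) ^ D s := by
  have hint : aeval x P * ∏ s, ((x s).den : ℚ) ^ D s =
      (∑ e ∈ P.support, coeff e P * ∏ s, (x s).num ^ e s * (x s).den ^ (D s - e s) : ℤ) := by
    rw [aeval_def, eval₂_eq', sum_mul]
    push_cast
    refine sum_congr rfl fun e he => ?_
    rw [mul_assoc, ← prod_mul_distrib]
    refine congrArg _ (prod_congr rfl fun s _ => ?_)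
    have hes : e s ≤ D s := degreeOf_le_iff.1 (hD s) e he
    calc x s ^ e s * ((x s).den : ℚ) ^ D s
        = (x s * (x s).den) ^ e s * ((x s).den : ℚ) ^ (D s - e s) := by
          rw [mul_pow, mul_assoc, ← pow_add, Nat.add_sub_cancel' hes]
      _ = _ := by rw [Rat.mul_den_eq_num]
  have hden : ∏ s, ((x s).den : ℚ) ^ D s ≠ 0 := prod_ne_zero_iff.2 fun s _ =>
    pow_ne_zero _ (Nat.cast_ne_zero.2 (x s).den_nz)
  rw [← abs_of_nonneg (a := ∏ s, ((x s).den : ℚ) ^ D s) (by positivity), ← abs_mul, hint,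
    ← Int.cast_abs]
  have hne := mul_ne_zero h hden
  rw [hint, Int.cast_ne_zero] at hne
  exact_mod_cast Int.one_le_abs hne

theorem aeval_eq_sum_hasse {R S : Type*} [CommRing R] [CommRing S] [Algebra R S]
    (P : MvPolynomial σ R) (ξ y : σ → S) :
    aeval y P = ∑ i ∈ (taylor P).support, aeval ξ (hasse i P) * ∏ s, (y s - ξ s) ^ i s := by
  let φ : MvPolynomial σ (MvPolynomial σ R) →+* S :=
    eval₂Hom (aeval ξ : MvPolynomial σ R →ₐ[R] S) (y - ξ)
  have hφ : φ.comp taylor.toRingHom = (aeval y : MvPolynomial σ R →ₐ[R] S).toRingHom :=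
    ringHom_ext (fun r => by simp [φ, taylor, MvPolynomial.algebraMap_apply])
      fun s => by simp [φ, taylor]
  calc aeval y P = φ (taylor P) := congr($hφ.symm P)
    _ = _ := eval₂_eq' _ _ _

theorem abs_aeval_le_len (hD : ∀ s, degreeOf s P ≤ D s) {ξ : σ → ℝ} {M : ℝ} (hM : 1 ≤ M)
    (hξ : ∀ s, |ξ s| ≤ M) : |aeval ξ P| ≤ M ^ (∑ s, D s) * len P := by
  rw [aeval_def, eval₂_eq', len, Nat.cast_sum, mul_sum]
  refine (abs_sum_le_sum_abs _ _).trans (sum_le_sum fun e he => ?_)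
  rw [abs_mul, abs_prod, ← prod_pow_eq_pow_sum, mul_comm, Nat.cast_natAbs, Int.cast_abs]
  refine mul_le_mul_of_nonneg_right (prod_le_prod (fun s _ => abs_nonneg _) fun s _ => ?_)
    (abs_nonneg _)
  rw [abs_pow]
  exact (pow_le_pow_left₀ (abs_nonneg _) (hξ s) _).trans
    (pow_le_pow_right₀ hM (degreeOf_le_iff.1 (hD s) e he))

theorem card_support_taylor_le (hD : ∀ s, degreeOf s P ≤ D s) :
    #(taylor P).support ≤ 2 ^ (∑ s, D s) := by
  classical
  have hsub : (taylor P).support ⊆ univ.image (boxExponent (D := D)) := fun i hi =>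
    mem_image.2 ⟨fun s => ⟨i s, Nat.lt_succ_of_le <|
      (le_degreeOf_of_mem_support_taylor hi s).trans (hD s)⟩, mem_univ _, Finsupp.ext fun _ => rfl⟩
  refine ((card_le_card hsub).trans card_image_le).trans ?_
  rw [card_univ, Fintype.card_pi, ← prod_pow_eq_pow_sum]
  refine prod_le_prod' fun s _ => ?_
  rw [Fintype.card_fin]
  exact Nat.succ_le_of_lt Nat.lt_two_pow_self

theorem abs_prod_pow_le {i : σ →₀ ℕ} (hi : ∀ s, i s ≤ D s) {w z : σ → ℝ} {M r : ℝ} (hM : 1 ≤ M)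
    (hz : ∀ s, |z s| ≤ M * Real.exp (-(r * w s))) :
    |∏ s, z s ^ i s| ≤ M ^ (∑ s, D s) * Real.exp (-(r * Finsupp.weight w i)) := calc
  |∏ s, z s ^ i s| ≤ ∏ s, (M ^ D s * Real.exp (-(r * (i s * w s)))) := by
    rw [abs_prod]
    refine prod_le_prod (fun s _ => abs_nonneg _) fun s _ => ?_
    rw [abs_pow]
    refine (pow_le_pow_left₀ (abs_nonneg _) (hz s) _).trans ?_
    rw [mul_pow, ← Real.exp_nat_mul, mul_neg, mul_left_comm]
    gcongr
    exact hi s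
  _ = M ^ (∑ s, D s) * Real.exp (-(r * Finsupp.weight w i)) := by
    rw [prod_mul_distrib, prod_pow_eq_pow_sum, ← Real.exp_sum, sum_neg_distrib, ← mul_sum,
      Finsupp.weight_eq_sum]
    simp only [nsmul_eq_mul]

theorem HasIndexGE.abs_aeval_le {w : σ → ℝ} {t r : ℝ} {ξ y : σ → ℝ} {M : ℝ}
    (h : HasIndexGE ξ w t P) (hD : ∀ s, degreeOf s P ≤ D s) (hM : 1 ≤ M) (hξ : ∀ s, |ξ s| ≤ M)
    (hr : 0 ≤ r) (hy : ∀ s, |y s - ξ s| ≤ M * Real.exp (-(r * w s))) :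
    |aeval y P| ≤ (4 * M ^ 2) ^ (∑ s, D s) * len P * Real.exp (-(r * t)) := by
  set d := ∑ s, D s
  have hterm : ∀ i ∈ (taylor P).support, |aeval ξ (hasse i P) * ∏ s, (y s - ξ s) ^ i s| ≤
      (2 * M ^ 2) ^ d * len P * Real.exp (-(r * t)) := fun i hi => by
    rcases lt_or_ge (Finsupp.weight w i) t with hit | hit
    · rw [h i hit, zero_mul, abs_zero]
      positivity
    have hprod : |∏ s, (y s - ξ s) ^ i s| ≤ M ^ d * Real.exp (-(r * t)) :=
      (abs_prod_pow_le (fun s => (le_degreeOf_of_mem_support_taylor hi s).trans (hD s)) hM hy).trans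
        (by gcongr)
    have hcoef : |aeval ξ (hasse i P)| ≤ M ^ d * (2 ^ d * len P : ℕ) :=
      (abs_aeval_le_len (fun s => (degreeOf_hasse_le i P s).trans (hD s)) hM hξ).trans <| by
        gcongr
        exact len_hasse_le hD i
    rw [abs_mul]
    refine (mul_le_mul hcoef hprod (abs_nonneg _) (by positivity)).trans_eq ?_
    push_cast
    ring
  have hcard : (#(taylor P).support : ℝ) ≤ 2 ^ d := mod_cast card_support_taylor_le hD
  rw [aeval_eq_sum_hasse P ξ y]
  calc |∑ i ∈ (taylor P).support, aeval ξ (hasse i P) * ∏ s, (y s - ξ s) ^ i s|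
      ≤ #(taylor P).support • ((2 * M ^ 2) ^ d * len P * Real.exp (-(r * t))) :=
        (abs_sum_le_sum_abs _ _).trans (sum_le_card_nsmul _ _ _ hterm)
    _ ≤ 2 ^ d * ((2 * M ^ 2) ^ d * len P * Real.exp (-(r * t))) := by
        rw [nsmul_eq_mul]
        gcongr
    _ = (4 * M ^ 2) ^ d * len P * Real.exp (-(r * t)) := by
        rw [← mul_assoc, ← mul_assoc, ← mul_pow]
        ring_nf

end Bounds

section Floor

theorem one_sub_lt_mul_floor_inv {w : ℝ} (hw : 0 < w) : 1 - w < w * ⌊w⁻¹⌋₊ := by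
  have := mul_lt_mul_of_pos_left (Nat.lt_floor_add_one w⁻¹) hw
  rw [mul_inv_cancel₀ hw.ne'] at this
  linarith

theorem mul_floor_inv_le_one {w : ℝ} (hw : 0 < w) : w * ⌊w⁻¹⌋₊ ≤ 1 :=
  (mul_le_mul_of_nonneg_left (Nat.floor_le (inv_pos.2 hw).le) hw.le).trans_eq
    (mul_inv_cancel₀ hw.ne')

theorem separated_floor_inv {σ : Type*} [LinearOrder σ] {G B : ℕ} {ℓ Λ : ℝ} {w : σ → ℝ} {x : σ → ℚ}
    (hB : 1 ≤ B) (hℓ : 0 < ℓ) (hΛ : 0 < Λ) (hden : ∀ i, ((x i).den : ℝ) = Real.exp (Λ * w i))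
    (hℓw : ∀ i, ℓ ≤ Λ * w i) (hw : ∀ i, w i ≤ 1 / 2) (hdecay : ∀ i j, i < j → G * w i ≤ w j)
    (hBℓ : 2 * (G * Real.log B) ≤ ℓ) :
    Separated G B ⌊Λ / ℓ⌋₊ (fun i => ⌊(w i)⁻¹⌋₊) w x := by
  have hpos (i) : 0 < w i := pos_of_mul_pos_right (hℓ.trans_le (hℓw i)) hΛ.le
  refine ⟨fun i => ?_, fun i => ?_, fun i => (hpos i).le, fun i => mul_floor_inv_le_one (hpos i),
    fun i j hij => ?_, fun i => ?_⟩
  · rw [Nat.one_le_floor_iff, one_le_inv₀ (hpos i)]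
    linarith [hw i]
  · refine Nat.floor_le_floor ?_
    rw [le_div_iff₀ hℓ, inv_mul_le_iff₀ (hpos i), mul_comm]
    exact hℓw i
  · refine Nat.le_floor ?_
    push_cast
    calc (G * ⌊(w j)⁻¹⌋₊ : ℝ) ≤ G * (w j)⁻¹ := by
          gcongr
          exact Nat.floor_le (inv_pos.2 (hpos j)).le
      _ ≤ (w i)⁻¹ := by
          rw [← div_eq_mul_inv, div_le_iff₀ (hpos j), ← div_eq_inv_mul, le_div_iff₀ (hpos i)]
          exact hdecay i j hij
  · have hN : ℓ * ⌊Λ / ℓ⌋₊ ≤ Λ := by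
      rw [mul_comm, ← le_div_iff₀ hℓ]
      exact Nat.floor_le (div_pos hΛ hℓ).le
    have : (0 : ℝ) < B := Nat.cast_pos.2 hB
    have hle : ((B : ℝ) ^ (G * ⌊Λ / ℓ⌋₊)) ≤ ((x i).den : ℝ) ^ ⌊(w i)⁻¹⌋₊ := by
      rw [hden, ← Real.exp_nat_mul, ← Real.log_le_iff_le_exp (by positivity), Real.log_pow]
      push_cast
      calc (G * ⌊Λ / ℓ⌋₊ : ℝ) * Real.log B = ⌊Λ / ℓ⌋₊ * (2 * (G * Real.log B)) / 2 := by ring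
        _ ≤ ⌊Λ / ℓ⌋₊ * ℓ / 2 := by gcongr
        _ ≤ Λ * (1 - w i) := by nlinarith [hw i]
        _ ≤ Λ * (w i * ⌊(w i)⁻¹⌋₊) := by
          gcongr
          exact (one_sub_lt_mul_floor_inv (hpos i)).le
        _ = ⌊(w i)⁻¹⌋₊ * (Λ * w i) := by ring
    exact_mod_cast hle

end Floor

section Approximation

theorem exists_hasIndexGE_of_isIntegral {c : ℝ} (hc : IsIntegral ℤ c) :
    ∃ A : ℕ, 1 ≤ A ∧ ∀ δ : ℝ, 0 < δ → ∃ m₀ : ℕ, ∀ {m : ℕ} {D : Fin m → ℕ} {w : Fin m → ℝ},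
      m₀ ≤ m → 0 ≤ w → (∀ s, w s * D s ≤ 1) → (∀ s, 1 - δ ≤ w s * D s) →
      ∃ P : MvPolynomial (Fin m) ℤ, P ≠ 0 ∧ (∀ s, degreeOf s P ≤ D s) ∧
      len P ≤ A ^ (∑ s, D s + 1) ∧ HasIndexGE (fun _ => c) w (m * (1 / 2 - δ)) P := by
  obtain ⟨n, A, v, hv⟩ := exists_pow_eq_sum hc
  choose a ha haA using hv
  refine ⟨8 * (A + 1), by omega, fun δ hδ => ?_⟩
  have htend : Filter.Tendsto (fun m : ℕ => 2 * n * Real.exp (-(2 * (δ / 2) ^ 2 * m)))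
      Filter.atTop (nhds (2 * n * 0)) :=
    (Real.tendsto_exp_neg_atTop_nhds_zero.comp
      (tendsto_natCast_atTop_atTop.const_mul_atTop (by positivity))).const_mul _
  rw [mul_zero] at htend
  obtain ⟨m₀, hm₀⟩ := Filter.eventually_atTop.1 (htend.eventually_le_const one_pos)
  refine ⟨m₀, fun {m D w} hm hw hwD hδD => ?_⟩
  refine exists_hasIndexGE_of_card_le (Nat.le_add_left 1 A) ha (fun j l => (haA j l).trans ?_) ?_
  · push_cast
    gcongr
    exact le_add_of_nonneg_right zero_le_one
  have hcount := card_weight_lt_le hw hwD (half_pos hδ).le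
    (t := m * (1 / 2 - δ)) <| by
      rw [Fintype.card_fin, ← sum_div, le_div_iff₀ two_pos]
      have := card_nsmul_le_sum univ (fun s => w s * D s) _ fun s _ => hδD s
      rw [nsmul_eq_mul, card_univ, Fintype.card_fin] at this
      linarith
  rw [Fintype.card_fin] at hcount
  rw [← Nat.cast_le (α := ℝ)]
  push_cast
  calc _ ≤ 2 * (Real.exp (-(2 * (δ / 2) ^ 2 * m)) * (∏ s, (D s + 1 : ℝ)) * n) := by
        gcongr
    _ = 2 * n * Real.exp (-(2 * (δ / 2) ^ 2 * m)) * ∏ s, (D s + 1 : ℝ) := by ring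
    _ ≤ ∏ s, (D s + 1 : ℝ) := mul_le_of_le_one_left (by positivity) (hm₀ _ hm)

variable {σ : Type*} [Fintype σ] {D : σ → ℕ} {P : MvPolynomial σ ℤ} {w : σ → ℝ}

theorem mul_sub_one_le_of_hasIndexGE {c t κ Λ M : ℝ} {x : σ → ℚ} (hD : ∀ s, degreeOf s P ≤ D s)
    (hΛ : 0 < Λ) (hκ : 0 ≤ κ) (hM : 1 ≤ M) (hc : |c| ≤ M) (hwD : ∀ s, w s * D s ≤ 1)
    (hden : ∀ s, ((x s).den : ℝ) = Real.exp (Λ * w s))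
    (hx : ∀ s, |x s - c| ≤ M * Real.exp (-(κ * Λ * w s)))
    (hlen : (8 * M ^ 2) ^ (∑ s, D s) * len P ≤ Real.exp Λ)
    (hP : HasIndexGE (fun _ => c) w t P) (hPx : ¬ HasIndexGE x w 1 P) :
    κ * (t - 1) ≤ Fintype.card σ + 1 := by
  obtain ⟨b, hb, hne⟩ : ∃ b, Finsupp.weight w b < 1 ∧ aeval x (hasse b P) ≠ 0 := by
    simpa only [HasIndexGE, not_forall, exists_prop] using hPx
  set A : ℚ := aeval x (hasse b P)
  have hDb (s) : degreeOf s (hasse b P) ≤ D s := (degreeOf_hasse_le b P s).trans (hD s)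
  have hcast : aeval (fun s => (x s : ℝ)) (hasse b P) = (A : ℝ) :=
    aeval_algebraMap_apply ℝ x (hasse b P)
  have hupper : |(A : ℝ)| ≤ Real.exp (Λ - κ * Λ * (t - 1)) := by
    rw [← hcast, sub_eq_add_neg, Real.exp_add]
    refine ((hasIndexGE_hasse hP b).mono (by linarith : t - 1 ≤ _)).abs_aeval_le hDb hM
      (fun _ => hc) (mul_nonneg hκ hΛ.le) hx |>.trans ?_
    gcongr
    refine le_trans ?_ hlen
    calc (4 * M ^ 2) ^ (∑ s, D s) * (len (hasse b P) : ℝ)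
        ≤ (4 * M ^ 2) ^ (∑ s, D s) * (2 ^ (∑ s, D s) * len P : ℕ) := by
          gcongr
          exact len_hasse_le hD b
      _ = (8 * M ^ 2) ^ (∑ s, D s) * len P := by
          push_cast
          rw [← mul_assoc, ← mul_pow]
          ring_nf
  have hprod : ∏ s, ((x s).den : ℝ) ^ D s ≤ Real.exp (Λ * Fintype.card σ) := by
    simp only [hden, ← Real.exp_nat_mul, ← Real.exp_sum]
    gcongr
    rw [← card_univ, ← nsmul_one, ← sum_const, mul_sum]
    refine sum_le_sum fun s _ => ?_
    rw [mul_left_comm, mul_comm (D s : ℝ)]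
    exact mul_le_mul_of_nonneg_left (hwD s) hΛ.le
  have hlower : 1 ≤ |(A : ℝ)| * ∏ s, ((x s).den : ℝ) ^ D s := by
    exact_mod_cast one_le_abs_aeval_mul_den_pow hDb hne
  have hexp := hlower.trans (mul_le_mul hupper hprod (by positivity) (by positivity))
  rw [← Real.exp_add, Real.one_le_exp_iff] at hexp
  have : 0 ≤ Λ * (Fintype.card σ + 1 - κ * (t - 1)) := by linarith
  linarith [nonneg_of_mul_nonneg_right this hΛ]

end Approximation

section GapPrinciple

variable {c κ : ℝ}

theorem exists_forall_exists_card_mul_gt (hκ : 2 < κ) :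
    ∃ δ : ℝ, 0 < δ ∧ δ ≤ 1 / 2 ∧ ∀ m₀ : ℕ, ∃ m : ℕ, 0 < m ∧ m₀ ≤ m ∧
      (m : ℝ) + 1 < κ * (m * (1 / 2 - δ) - 1) := by
  refine ⟨(κ - 2) / (4 * κ), div_pos (sub_pos.2 hκ) (by linarith), ?_, fun m₀ => ?_⟩
  · rw [div_le_iff₀ (by linarith)]
    linarith
  obtain ⟨m, hm⟩ := exists_nat_gt (4 * (κ + 1) / (κ - 2))
  rw [div_lt_iff₀ (sub_pos.2 hκ)] at hm
  have hm₀ : (0 : ℝ) ≤ m₀ * (κ - 2) := mul_nonneg m₀.cast_nonneg (sub_pos.2 hκ).le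
  refine ⟨m₀ + m + 1, by omega, by omega, ?_⟩
  have hexp : κ * ((m₀ + m + 1 : ℕ) * (1 / 2 - (κ - 2) / (4 * κ)) - 1) =
      (m₀ + m + 1 : ℕ) * (κ + 2) / 4 - κ := by
    field_simp
    ring
  rw [hexp]
  push_cast
  linarith

theorem exists_separated {σ : Type*} [LinearOrder σ] [Finite σ] [Nonempty σ] {G B : ℕ} {δ : ℝ}
    {x : σ → ℚ} (hB : 2 ≤ B) (hδ : 0 < δ) (hδ2 : δ ≤ 1 / 2)
    (hxB : ∀ i, B ^ (2 * G + 1) ≤ (x i).den)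
    (hxG : ∀ i j, i < j → (x i).den ^ G ≤ (x j).den) :
    ∃ (Λ : ℝ) (N : ℕ) (D : σ → ℕ) (w : σ → ℝ), 0 < Λ ∧ (B : ℝ) ^ N ≤ Real.exp Λ ∧
      (∀ i, ((x i).den : ℝ) = Real.exp (Λ * w i)) ∧ (∀ i, 1 - δ ≤ w i * D i) ∧
      Separated G B N D w x := by
  cases nonempty_fintype σ
  let ℓ := (2 * G + 1) * Real.log B
  let L : σ → ℝ := fun i => Real.log (x i).den
  let Λ := (∑ i, L i) / δ
  have hdenpos (i) : (0 : ℝ) < (x i).den := Nat.cast_pos.2 (x i).den_pos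
  have hlogB : 0 < Real.log B := Real.log_pos (Nat.one_lt_cast.2 hB)
  have hℓ : 0 < ℓ := by positivity
  have hℓL (i) : ℓ ≤ L i := by
    have h := Real.log_le_log (by positivity) (Nat.cast_le (α := ℝ).2 (hxB i))
    rw [Nat.cast_pow, Real.log_pow] at h
    push_cast at h
    exact h
  have hLpos (i) : 0 < L i := hℓ.trans_le (hℓL i)
  have hΛ : 0 < Λ := div_pos (sum_pos (fun i _ => hLpos i) univ_nonempty) hδ
  have hwL (i) : Λ * (L i / Λ) = L i := mul_div_cancel₀ _ hΛ.ne'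
  have hwδ (i) : L i / Λ ≤ δ := by
    rw [div_le_iff₀ hΛ, mul_div_cancel₀ _ hδ.ne']
    exact single_le_sum (fun j _ => (hLpos j).le) (mem_univ i)
  have hden (i) : ((x i).den : ℝ) = Real.exp (Λ * (L i / Λ)) := by
    rw [hwL, Real.exp_log (hdenpos i)]
  refine ⟨Λ, ⌊Λ / ℓ⌋₊, fun i => ⌊(L i / Λ)⁻¹⌋₊, fun i => L i / Λ, hΛ, ?_, hden, fun i => ?_,
    separated_floor_inv (by omega) hℓ hΛ hden (fun i => (hℓL i).trans_eq (hwL i).symm)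
      (fun i => (hwδ i).trans hδ2) (fun i j hij => ?_) ?_⟩
  · rw [← Real.log_le_iff_le_exp (by positivity), Real.log_pow]
    refine le_trans ?_ ((le_div_iff₀ hℓ).1 (Nat.floor_le (div_pos hΛ hℓ).le))
    gcongr
    exact le_mul_of_one_le_left hlogB.le (by linarith [G.cast_nonneg (α := ℝ)])
  · linarith [hwδ i, one_sub_lt_mul_floor_inv (div_pos (hLpos i) hΛ)]
  · rw [← mul_div_assoc]
    gcongr
    rw [← Real.log_pow]
    exact Real.log_le_log (pow_pos (hdenpos i) _) (mod_cast hxG i j hij)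
  · linarith

theorem pow_mul_pow_le {a b d m N : ℕ} (ha : 1 ≤ a) (hb : 1 ≤ b) (hN : 1 ≤ N) (hd : d ≤ m * N) :
    a ^ d * b ^ (d + 1) ≤ ((a * b) ^ (m + 1)) ^ N := calc
  a ^ d * b ^ (d + 1) ≤ a ^ (d + 1) * b ^ (d + 1) := by
    gcongr
    exact d.le_succ
  _ = (a * b) ^ (d + 1) := (mul_pow _ _ _).symm
  _ ≤ (a * b) ^ ((m + 1) * N) := by
    refine Nat.pow_le_pow_right (Nat.mul_pos ha hb) ?_
    rw [add_mul, one_mul]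
    exact add_le_add hd hN
  _ = ((a * b) ^ (m + 1)) ^ N := pow_mul _ _ _

theorem exists_lt_abs_sub (hc : IsIntegral ℤ c) (hκ : 2 < κ) (C : ℝ) :
    ∃ m G H : ℕ, ∀ x : Fin m → ℚ, (∀ i, H ≤ (x i).den) →
      (∀ i j, i < j → (x i).den ^ G ≤ (x j).den) →
      ∃ i, C * ((x i).den : ℝ) ^ (-κ) < |x i - c| := by
  obtain ⟨A, hA, haux⟩ := exists_hasIndexGE_of_isIntegral hc
  obtain ⟨M, hM⟩ := exists_nat_ge (max 1 (max |c| C))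
  obtain ⟨hM1, hcM, hCM⟩ : (1 : ℝ) ≤ M ∧ |c| ≤ M ∧ C ≤ M := by
    simpa only [max_le_iff] using hM
  obtain ⟨δ, hδ, hδ2, hm⟩ := exists_forall_exists_card_mul_gt hκ
  obtain ⟨m₀, hP⟩ := haux δ hδ
  obtain ⟨m, hm, hm₀, hlt⟩ := hm m₀
  have : Nonempty (Fin m) := ⟨⟨0, hm⟩⟩
  obtain ⟨G, hG⟩ := exists_not_hasIndexGE_of_separated (univ : Finset (Fin m)) one_pos le_rfl
  have hM0 : 1 ≤ M ^ 2 := Nat.one_le_pow 2 M (Nat.cast_pos.1 (one_pos.trans_le hM1))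
  set B := (8 * M ^ 2 * A) ^ (m + 1)
  have hB : 2 ≤ B := le_trans (by nlinarith) (Nat.le_self_pow m.succ_ne_zero _)
  refine ⟨m, G, B ^ (2 * G + 1), fun x hxB hxG => ?_⟩
  by_contra! hx
  obtain ⟨Λ, N, D, w, hΛ, hBN, hden, hwD, hsep⟩ := exists_separated hB hδ hδ2 hxB hxG
  obtain ⟨P, hP0, hPD, hPlen, hPc⟩ := hP hm₀ hsep.nonneg hsep.weight_mul_le hwD
  have hDN : ∑ i, D i ≤ m * N := by
    simpa only [card_univ, Fintype.card_fin, smul_eq_mul] using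
      sum_le_card_nsmul univ D N fun i _ => hsep.le i
  have hlen : (8 * M ^ 2) ^ (∑ i, D i) * len P ≤ B ^ N :=
    (Nat.mul_le_mul_left _ hPlen).trans <| pow_mul_pow_le (by omega) hA
      ((hsep.one_le ⟨0, hm⟩).trans (hsep.le _)) hDN
  have hnot : ¬ HasIndexGE x w 1 P := hG hB hsep hP0 (by simp) hPD <|
    (Nat.le_mul_of_pos_left _ (by positivity)).trans hlen
  refine hlt.not_ge ?_
  have hxM (i) : |x i - c| ≤ M * Real.exp (-(κ * Λ * w i)) := (hx i).trans <| by
    rw [hden, ← Real.exp_mul, mul_neg, mul_comm _ κ, mul_assoc]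
    gcongr
  simpa only [Fintype.card_fin] using mul_sub_one_le_of_hasIndexGE hPD hΛ (by linarith) hM1 hcM
    hsep.weight_mul_le hden hxM (le_trans (mod_cast hlen) hBN) hPc hnot

end GapPrinciple

section Finiteness

variable {c κ : ℝ}

theorem exists_den_ge_of_infinite {S : Set ℚ} (hS : S.Infinite)
    (hbdd : Bornology.IsBounded ((↑) '' S : Set ℝ)) (n : ℕ) : ∃ x ∈ S, n ≤ x.den := by
  by_contra! hlt
  obtain ⟨R, hR⟩ := hbdd.exists_norm_le
  have hnum : ∀ x ∈ S, |x.num| ≤ ⌈R⌉ * n := fun x hx => by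
    have hxR : |(x : ℝ)| ≤ ⌈R⌉ := (hR _ ⟨x, hx, rfl⟩).trans (Int.le_ceil R)
    have : |x| ≤ (⌈R⌉ : ℚ) := mod_cast hxR
    have hnum : |(x.num : ℚ)| ≤ ⌈R⌉ * n := by
      rw [← Rat.mul_den_eq_num x, abs_mul, Nat.abs_cast]
      exact mul_le_mul this (Nat.cast_le.2 (hlt x hx).le) x.den.cast_nonneg
        ((abs_nonneg x).trans this)
    exact_mod_cast hnum
  refine hS (((Set.finite_Icc (-(⌈R⌉ * n)) (⌈R⌉ * n)).prod (Set.finite_Iio n)).of_injOn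
    (f := fun x : ℚ => (x.num, x.den)) (fun x hx => ?_) fun x _ y _ hxy => ?_)
  · exact ⟨abs_le.1 (hnum x hx), hlt x hx⟩
  · exact Rat.ext (congrArg Prod.fst hxy) (congrArg Prod.snd hxy)

theorem finite_abs_sub_le_rpow (hc : IsIntegral ℤ c) (hκ : 2 < κ) (C : ℝ) :
    {x : ℚ | |x - c| ≤ C * (x.den : ℝ) ^ (-κ)}.Finite := by
  set S := {x : ℚ | |x - c| ≤ C * (x.den : ℝ) ^ (-κ)}
  by_contra hS
  have hbdd : Bornology.IsBounded ((↑) '' S : Set ℝ) := by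
    refine (Metric.isBounded_closedBall (x := c) (r := |C|)).subset ?_
    rintro _ ⟨x, hx, rfl⟩
    have hden : ((x.den : ℝ) ^ (-κ)) ≤ 1 :=
      Real.rpow_le_one_of_one_le_of_nonpos (Nat.one_le_cast.2 x.den_pos) (by linarith)
    rw [Metric.mem_closedBall, Real.dist_eq]
    calc |x - c| ≤ C * (x.den : ℝ) ^ (-κ) := hx
      _ ≤ |C| * (x.den : ℝ) ^ (-κ) := by
        gcongr
        exact le_abs_self C
      _ ≤ |C| := mul_le_of_le_one_right (abs_nonneg C) hden
  obtain ⟨m, G, H, hgap⟩ := exists_lt_abs_sub hc hκ C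
  obtain ⟨f, hf, hfG⟩ := exists_seq_of_forall_finset_exists (fun x => x ∈ S ∧ H ≤ x.den)
    (fun x y => x.den ^ G ≤ y.den) fun T _ => by
      obtain ⟨y, hyS, hy⟩ := exists_den_ge_of_infinite hS hbdd (H + ∑ x ∈ T, x.den ^ G)
      exact ⟨y, ⟨hyS, by omega⟩, fun x hx =>
        (single_le_sum (f := fun x => x.den ^ G) (fun _ _ => Nat.zero_le _) hx).trans (by omega)⟩
  obtain ⟨i, hi⟩ := hgap (fun i => f i) (fun i => (hf i).2) fun i j hij => hfG _ _ hij
  exact hi.not_ge (hf i).1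

end Finiteness

section Application

open Filter ComplexConjugate

variable {c κ : ℝ} {n : ℕ} {z w : ℂ}

theorem eventually_eq_of_abs_sub_le_rpow (hc : IsIntegral ℤ c) (hκ : 2 < κ) (C : ℝ) :
    ∀ᶠ q : ℕ in atTop, ∀ p : ℤ, |(p : ℝ) / q - c| ≤ C * (q : ℝ) ^ (-κ) → (p : ℝ) / q = c := by
  have hlim : Tendsto (fun q : ℕ => C * (q : ℝ) ^ (-κ)) atTop (nhds 0) := by
    have hpow := tendsto_rpow_neg_atTop (zero_lt_two.trans hκ)
    simpa only [mul_zero, Function.comp_def] using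
      (hpow.comp tendsto_natCast_atTop_atTop).const_mul C
  have hfar : ∀ᶠ q : ℕ in atTop, ∀ x ∈ {x : ℚ | |x - c| ≤ C * (x.den : ℝ) ^ (-κ)},
      (x : ℝ) ≠ c → C * (q : ℝ) ^ (-κ) < |x - c| :=
    (eventually_all_finite (finite_abs_sub_le_rpow hc hκ C)).2 fun x _ =>
      eventually_imp_distrib_left.2 fun hx => hlim.eventually_lt_const (abs_sub_pos.2 hx)
  filter_upwards [hfar, eventually_gt_atTop 0] with q hq hq0 p hp
  by_contra hne
  have hcast : ((p / q : ℚ) : ℝ) = (p : ℝ) / q := by push_cast; rfl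
  have hden : (p / q : ℚ).den ≤ q := by
    refine Nat.le_of_dvd hq0 (Int.natCast_dvd_natCast.1 ?_)
    simpa only [Rat.divInt_eq_div, Int.cast_natCast] using Rat.den_dvd p q
  have hC : 0 ≤ C :=
    nonneg_of_mul_nonneg_left ((abs_nonneg _).trans hp) (Real.rpow_pos_of_pos (by positivity) _)
  refine (hq (p / q) ?_ (hcast ▸ hne)).not_ge (hcast ▸ hp)
  rw [hcast]
  refine hp.trans (mul_le_mul_of_nonneg_left ?_ hC)
  exact Real.rpow_le_rpow_of_nonpos (Nat.cast_pos.2 (p / q : ℚ).den_pos) (Nat.cast_le.2 hden)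
    (by linarith)

theorem exists_pow_eq_norm_sub_le (hn : n ≠ 0) (hz : ‖z‖ = 1) (hw : ‖w‖ = 1) :
    ∃ ζ : ℂ, ζ ^ n = w ∧ n * ‖z - ζ‖ ≤ Real.pi / 2 * ‖z ^ n - w‖ := by
  have hzn : ‖z ^ n‖ = 1 := by rw [norm_pow, hz, one_pow]
  have hw0 : w ≠ 0 := norm_ne_zero_iff.1 (hw ▸ one_ne_zero)
  have hzn0 : z ^ n ≠ 0 := norm_ne_zero_iff.1 (hzn ▸ one_ne_zero)
  have hn0 : (n : ℝ) ≠ 0 := Nat.cast_ne_zero.2 hn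
  set φ := (w / z ^ n).arg
  have hφ : Complex.exp (Complex.I * φ) = w / z ^ n := by
    have hnorm : ‖w / z ^ n‖ = 1 := by rw [norm_div, hw, hzn, div_one]
    rw [mul_comm, ← one_mul (Complex.exp _), ← Complex.ofReal_one, ← hnorm]
    exact Complex.norm_mul_exp_arg_mul_I _
  refine ⟨z * Complex.exp (Complex.I * (φ / n : ℝ)), ?_, ?_⟩
  · rw [mul_pow, ← Complex.exp_nat_mul, mul_left_comm, ← Complex.ofReal_natCast,
      ← Complex.ofReal_mul, mul_div_cancel₀ _ hn0, hφ, mul_div_cancel₀ _ hzn0]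
  · calc n * ‖z - z * Complex.exp (Complex.I * (φ / n : ℝ))‖
        = n * ‖Complex.exp (Complex.I * (φ / n : ℝ)) - 1‖ := by
          rw [norm_sub_rev, ← mul_sub_one, norm_mul, hz, one_mul]
      _ ≤ n * ‖φ / n‖ := by gcongr; exact Real.norm_exp_I_mul_ofReal_sub_one_le
      _ = |φ| := by
          rw [Real.norm_eq_abs, abs_div, Nat.abs_cast, mul_div_cancel₀ _ hn0]
      _ = InnerProductGeometry.angle w (z ^ n) := (Complex.angle_eq_abs_arg hw0 hzn0).symm
      _ ≤ Real.pi / 2 * ‖w - z ^ n‖ := Complex.angle_le_mul_norm_sub hw hzn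
      _ = Real.pi / 2 * ‖z ^ n - w‖ := by rw [norm_sub_rev]

theorem abs_re_sq_sub_re_sq_le (hz : ‖z‖ = 1) (hw : ‖w‖ = 1) :
    |(z ^ 2).re - (w ^ 2).re| ≤ 2 * ‖z - w‖ :=
  calc |(z ^ 2).re - (w ^ 2).re| ≤ ‖z ^ 2 - w ^ 2‖ := by
        rw [← Complex.sub_re]; exact Complex.abs_re_le_norm _
    _ = ‖z + w‖ * ‖z - w‖ := by rw [sq_sub_sq, norm_mul]
    _ ≤ 2 * ‖z - w‖ := by
        gcongr
        linarith [norm_add_le z w]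

theorem isIntegral_two_mul_re (hz : IsIntegral ℤ z) : IsIntegral ℤ (2 * z.re) := by
  have hconj : IsIntegral ℤ (conj z) := hz.map (starRingEnd ℂ).toIntAlgHom
  refine (isIntegral_algebraMap_iff (algebraMap ℝ ℂ).injective).1 ?_
  simpa only [Complex.coe_algebraMap, ← Complex.add_conj] using hz.add hconj

theorem eq_or_eq_conj_of_re_eq (hnorm : ‖z‖ = ‖w‖) (hre : z.re = w.re) : z = w ∨ z = conj w := by
  have him : z.im ^ 2 = w.im ^ 2 := by
    have := congrArg (· ^ 2) hnorm
    simp only [Complex.sq_norm, Complex.normSq_apply, hre] at this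
    linarith
  exact (sq_eq_sq_iff_eq_or_eq_neg.1 him).imp (Complex.ext hre) (Complex.ext hre)

theorem finite_setOf_pow_eq (hn : n ≠ 0) (w : ℂ) : {ζ : ℂ | ζ ^ n = w}.Finite :=
  (Polynomial.nthRoots n w).toFinset.finite_toSet.subset fun ζ hζ => by
    simpa only [coe_sort_coe, mem_coe, Multiset.mem_toFinset,
      Polynomial.mem_nthRoots (Nat.pos_of_ne_zero hn), Set.mem_ofPred_eq] using hζ

theorem eventually_pow_eq_one_of_norm_pow_add_one_le (hn : n ≠ 0) (hκ : 2 < κ) :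
    ∀ᶠ q : ℕ in atTop, ∀ (p : ℤ) (β : ℂ), ‖β‖ = 1 → 2 * (β ^ 2).re = p / q →
      ‖β ^ n + 1‖ ≤ (q : ℝ) ^ (-κ) → β ^ (2 * n) = 1 := by
  have hroth : ∀ᶠ q : ℕ in atTop, ∀ ζ ∈ {ζ : ℂ | ζ ^ n = -1}, ∀ p : ℤ,
      |(p : ℝ) / q - 2 * (ζ ^ 2).re| ≤ 2 * Real.pi * (q : ℝ) ^ (-κ) →
        (p : ℝ) / q = 2 * (ζ ^ 2).re := by
    refine (eventually_all_finite (finite_setOf_pow_eq hn (-1))).2 fun ζ hζ => ?_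
    have hζint : IsIntegral ℤ ζ := .of_pow (Nat.pos_of_ne_zero hn) (hζ ▸ isIntegral_one.neg)
    exact eventually_eq_of_abs_sub_le_rpow (isIntegral_two_mul_re (hζint.pow 2)) hκ _
  filter_upwards [hroth] with q hq p β hβ hp hclose
  obtain ⟨ζ, hζ, hβζ⟩ := exists_pow_eq_norm_sub_le hn hβ (w := -1) (by rw [norm_neg, norm_one])
  have hζ1 : ‖ζ‖ = 1 := Complex.norm_eq_one_of_pow_eq_one (n := 2 * n)
    (by rw [mul_comm, pow_mul, hζ, neg_one_sq]) (by omega)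
  have hdist : ‖β - ζ‖ ≤ Real.pi / 2 * (q : ℝ) ^ (-κ) :=
    calc ‖β - ζ‖ ≤ n * ‖β - ζ‖ := le_mul_of_one_le_left (norm_nonneg _)
          (Nat.one_le_cast.2 (Nat.one_le_iff_ne_zero.2 hn))
      _ ≤ Real.pi / 2 * ‖β ^ n + 1‖ := by rwa [sub_neg_eq_add] at hβζ
      _ ≤ _ := by gcongr
  have hre : (β ^ 2).re = (ζ ^ 2).re := by
    have happrox : |(p : ℝ) / q - 2 * (ζ ^ 2).re| ≤ 2 * Real.pi * (q : ℝ) ^ (-κ) := by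
      rw [← hp, ← mul_sub, abs_mul, abs_two]
      linarith [abs_re_sq_sub_re_sq_le hβ hζ1]
    linarith [hq ζ hζ p happrox]
  have hζ2 : (ζ ^ 2) ^ n = 1 := by
    rw [← pow_mul, mul_comm, pow_mul, hζ, neg_one_sq]
  rw [pow_mul]
  rcases eq_or_eq_conj_of_re_eq (by rw [norm_pow, norm_pow, hβ, hζ1]) hre with h | h
  · rw [h, hζ2]
  · rw [h, ← map_pow, hζ2, map_one]

theorem norm_add_one_sq (hz : ‖z‖ = 1) : ‖z + 1‖ ^ 2 = 2 + 2 * z.re := by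
  have hsq := congrArg (· ^ 2) hz
  simp only [Complex.sq_norm, Complex.normSq_apply, Complex.add_re, Complex.add_im, Complex.one_re,
    Complex.one_im] at hsq ⊢
  linarith

end Application

section WeilNumbers

open ComplexConjugate

variable {q a₁ A : ℤ} {α : ℂ} {n : ℕ}

theorem re_eq_half_of_sq_sub_mul_add_eq_zero (ha : a₁ ^ 2 ≤ 4 * q) (hα : α ^ 2 - a₁ * α + q = 0) :
    α.re = a₁ / 2 := by
  have haR : (a₁ : ℝ) ^ 2 ≤ 4 * q := mod_cast ha
  have hre : α.re ^ 2 - α.im ^ 2 - a₁ * α.re + q = 0 := by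
    simpa [pow_two] using congrArg Complex.re hα
  have him : α.im * (2 * α.re - a₁) = 0 := by
    have : α.re * α.im + α.im * α.re - a₁ * α.im = 0 := by
      simpa [pow_two] using congrArg Complex.im hα
    linarith
  rcases mul_eq_zero.1 him with h | h
  · rw [h] at hre
    have : (α.re - a₁ / 2) ^ 2 = 0 := le_antisymm (by nlinarith) (sq_nonneg _)
    linarith [pow_eq_zero_iff two_ne_zero |>.1 this]
  · linarith

theorem norm_eq_sqrt_of_sq_sub_mul_add_eq_zero (ha : a₁ ^ 2 ≤ 4 * q)
    (hα : α ^ 2 - a₁ * α + q = 0) : ‖α‖ = √q := by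
  have hre := re_eq_half_of_sq_sub_mul_add_eq_zero ha hα
  have hsq : α.re ^ 2 - α.im ^ 2 - a₁ * α.re + q = 0 := by
    simpa [pow_two] using congrArg Complex.re hα
  have hnorm : (q : ℝ) = ‖α‖ ^ 2 := by
    rw [Complex.sq_norm, Complex.normSq_apply]
    rw [show (a₁ : ℝ) = 2 * α.re by linarith] at hsq
    linarith
  rw [hnorm, Real.sqrt_sq (norm_nonneg _)]

theorem two_mul_re_div_sqrt_sq (hq : 0 < q) (ha : a₁ ^ 2 ≤ 4 * q)
    (hα : α ^ 2 - a₁ * α + q = 0) :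
    2 * ((α / (√q : ℂ)) ^ 2).re = ((a₁ ^ 2 - 2 * q : ℤ) : ℝ) / q := by
  have hqR : (0 : ℝ) < q := mod_cast hq
  have hsqrt : (√q : ℂ) ^ 2 = ((q : ℝ) : ℂ) := by
    rw [← Complex.ofReal_pow, Real.sq_sqrt hqR.le]
  have hα2 : α ^ 2 = a₁ * α - q := by linear_combination hα
  have hre : (α ^ 2).re = a₁ * (a₁ / 2) - q := by
    rw [hα2, ← re_eq_half_of_sq_sub_mul_add_eq_zero ha hα]
    simp only [Complex.sub_re, Complex.mul_re, Complex.intCast_re, Complex.intCast_im, zero_mul,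
      sub_zero]
  rw [div_pow, hsqrt, Complex.div_ofReal_re, hre]
  push_cast
  ring

theorem two_mul_sqrt_pow_mul_re (hq : 0 < q) (hA : (A : ℂ) = α ^ n + conj α ^ n) :
    2 * √q ^ n * ((α / (√q : ℂ)) ^ n).re = A := by
  have : (0 : ℝ) < q := mod_cast hq
  have hre := congrArg Complex.re hA
  rw [← map_pow, Complex.add_re, Complex.conj_re, Complex.intCast_re] at hre
  rw [div_pow, ← Complex.ofReal_pow, Complex.div_ofReal_re, hre]
  field_simp
  ring

theorem norm_pow_add_one_le_of_neg_eq_floor (hq : 0 < q) (hβ : ‖α / (√q : ℂ)‖ = 1)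
    (hA : (A : ℂ) = α ^ n + conj α ^ n) (hfloor : -A = ⌊2 * √q ^ n⌋) :
    ‖(α / (√q : ℂ)) ^ n + 1‖ ≤ (q : ℝ) ^ (-(n / 4 : ℝ)) := by
  have hqR : (0 : ℝ) < q := mod_cast hq
  have hpow : 0 < √(q : ℝ) ^ n := by positivity
  have hlt : 2 * √(q : ℝ) ^ n < -A + 1 := by
    have := Int.lt_floor_add_one (2 * √(q : ℝ) ^ n)
    rw [← hfloor] at this
    exact_mod_cast this
  have hrpow : ((q : ℝ) ^ (-(n / 4 : ℝ))) ^ 2 = (√q ^ n)⁻¹ := by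
    rw [Real.sqrt_eq_rpow, ← Real.rpow_mul_natCast hqR.le, ← Real.rpow_mul_natCast hqR.le,
      ← Real.rpow_neg hqR.le]
    congr 1
    push_cast
    ring
  refine le_of_sq_le_sq ?_ (by positivity)
  rw [norm_add_one_sq (by rw [norm_pow, hβ, one_pow]), hrpow, ← one_div, le_div_iff₀ hpow]
  linarith [two_mul_sqrt_pow_mul_re hq hA]

end WeilNumbers

end Roth

open Roth

theorem bounded_q_or_supersingular_general {n : ℕ} (hn : 9 ≤ n) :
    ∃ Q : ℤ, ∀ q a₁ A : ℤ, a₁ ^ 2 ≤ 4 * q →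
      ∀ α β : ℂ, α ^ 2 - a₁ * α + q = 0 → β = α / (Real.sqrt q : ℂ) →
      (A : ℂ) = α ^ n + (starRingEnd ℂ) α ^ n → -A = ⌊2 * Real.sqrt q ^ n⌋ →
      q ≤ Q ∨ β ^ (2 * n) = 1 := by
  have hκ : 2 < (n / 4 : ℝ) := by
    have : (9 : ℝ) ≤ n := mod_cast hn
    linarith
  obtain ⟨N, hN⟩ := Filter.eventually_atTop.1
    (eventually_pow_eq_one_of_norm_pow_add_one_le (by omega : n ≠ 0) hκ)
  refine ⟨N, fun q a₁ A ha α β hα hβ hA hfloor => or_iff_not_imp_left.2 fun hqN => ?_⟩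
  have hq : 0 < q := by omega
  have hnorm : ‖α / (√q : ℂ)‖ = 1 := by
    have hqR : 0 < √(q : ℝ) := Real.sqrt_pos.2 (mod_cast hq)
    rw [norm_div, norm_eq_sqrt_of_sq_sub_mul_add_eq_zero ha hα, Complex.norm_real,
      Real.norm_of_nonneg hqR.le, div_self hqR.ne']
  have hre := two_mul_re_div_sqrt_sq hq ha hα
  have hclose := norm_pow_add_one_le_of_neg_eq_floor hq hnorm hA hfloor
  lift q to ℕ using hq.le
  rw [hβ]
  exact hN q (by omega) _ _ hnorm hre hclose

/-- For every integer `n ≥ 13` there is a constant `qₙ` such that whenever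
integers `q, a₁` with `q ≥ 2`, `a₁² ≤ 4q` satisfy `−aₙ = ⌊2·q^{n/2}⌋`, either `q ≤ qₙ` or the
pair `(q, a₁)` is supersingular (i.e. `β` is a root of unity). -/
theorem bounded_q_or_supersingular (n : ℕ) (hn : 13 ≤ n) :
    ∃ qn : ℤ, ∀ q a1 : ℤ, 2 ≤ q → a1 ^ 2 ≤ 4 * q →
      ∀ α β : ℂ, α ^ 2 - a1 * α + q = 0 → 0 ≤ α.im → β = α / (Real.sqrt q : ℂ) →
      ∀ a : ℕ → ℤ, (∀ k : ℕ, (a k : ℂ) = α ^ k + (starRingEnd ℂ) α ^ k) →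
      -(a n) = ⌊2 * Real.sqrt q ^ n⌋ →
      q ≤ qn ∨ ∃ k : ℕ, 0 < k ∧ β ^ k = 1 := by
  obtain ⟨Q, hQ⟩ := bounded_q_or_supersingular_general (by omega : 9 ≤ n)
  exact ⟨Q, fun q a1 _ ha α β hα _ hβ a haa hfloor =>
    (hQ q a1 (a n) ha α β hα hβ (haa n) hfloor).imp_right fun h => ⟨2 * n, by omega, h⟩⟩
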